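/- arXiv:math-ph/0702051 — 3 statements merged into one kernel-verified Lean document; each statement's English description precedes it below -/
import Mathlib

section
/- (Proposition B(i), regular case.) Consider the ODE p y′ + q y = r on U = (a,b), where p, q, r ∈ C^m(U), p has a zero of order l_p at x̂ ∈ U and q a zero of order l_q at x̂ (l_p, l_q < m), p and q have no other zeros in U, and r has a zero of order l_r ≥ l_p at x̂. Suppose l_p ≤ l_q. Then the solutions of the ODE belonging to C^{m−l_p+1}(U) form a one-parameter family: any antiderivative w of q/p on U is of class C^{m−l_p+1}, the function x ↦ e^{−w(x)} ( c + ∫^x e^{w(s)} r(s)/p(s) ds ) is, for every c ∈ ℝ, a solution in C^{m−l_p+1}(U), and every C¹ solution on U is of this form. -/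
/-!
The heart of the matter is a Hadamard-type division lemma (`exists_factor`): a function of class
`C^(n+l)` whose derivatives of order `< l` vanish at `xh` equals `(x - xh)^l F(x)` with `F` of
class `C^n` and `l! F(xh) = f^(l)(xh)`. It is proved by induction on `l`: if
`f' = (x - xh)^(l-1) Q`, then `f(x) = (x - xh) ∫₀¹ f'(xh + t (x - xh)) dt` gives
`F(x) = ∫₀¹ t^(l-1) Q(xh + t (x - xh)) dt`. Such a weighted average `radialMean` inherits the
smoothness of `Q` by differentiation under the integral sign (`contDiffOn_radialMean`).

Dividing `p`, `q`, `r` by `(x - xh)^lp` yields `P`, `Q`, `R` of class `C^(m-lp)` with `P` free of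
zeros. Hence `q/p` and `e^w r/p` extend to `Q/P` and `e^w R/P`, which are of class `C^(m-lp)`, and
their antiderivatives gain one derivative. The identities `p h = q` and `p g = e^w r` turn the ODE
into `(e^w y)' = g`, first away from `xh` and then, by continuity, everywhere; so `e^w y - W` is
constant.
-/

open Set

namespace SingularODE16

/-- `g` has a zero of order `l` at `xh`. -/
def HasZeroOfOrder (g : ℝ → ℝ) (xh : ℝ) (l : ℕ) : Prop :=
  (∀ k < l, iteratedDeriv k g xh = 0) ∧ iteratedDeriv l g xh ≠ 0

/-- The weighted average `∫₀¹ t^j φ(xh + t (x - xh)) dt` of `φ` over the segment from `xh`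
to `x`. -/
noncomputable def radialMean (xh : ℝ) (j : ℕ) (φ : ℝ → ℝ) (x : ℝ) : ℝ :=
  ∫ t in (0 : ℝ)..1, t ^ j * φ (xh + t * (x - xh))

lemma segment_mem {a b xh x t : ℝ} (hxh : xh ∈ Ioo a b) (hx : x ∈ Ioo a b)
    (ht : t ∈ Icc (0 : ℝ) 1) : xh + t * (x - xh) ∈ Ioo a b := by
  have := (convex_Ioo a b).add_smul_sub_mem hxh hx ht
  simpa using this

lemma continuousOn_radial {a b xh x : ℝ} (hxh : xh ∈ Ioo a b) (hx : x ∈ Ioo a b) (j : ℕ)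
    {φ : ℝ → ℝ} (hφ : ContinuousOn φ (Ioo a b)) :
    ContinuousOn (fun t : ℝ => t ^ j * φ (xh + t * (x - xh))) (Icc 0 1) := by
  refine ContinuousOn.mul (by fun_prop) (hφ.comp (by fun_prop) ?_)
  intro t ht
  exact segment_mem hxh hx ht

lemma continuousOn_radialMean {a b xh : ℝ} (hxh : xh ∈ Ioo a b) (j : ℕ)
    {φ : ℝ → ℝ} (hφ : ContinuousOn φ (Ioo a b)) :
    ContinuousOn (radialMean xh j φ) (Ioo a b) := by
  rw [continuousOn_iff_continuous_domRestrict]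
  -- Clamping `t` to `[0, 1]` makes the integrand continuous for all real `t`.
  have key : Continuous fun x : Ioo a b => ∫ t in (0 : ℝ)..1,
      t ^ j * φ (xh + max 0 (min t 1) * ((x : ℝ) - xh)) := by
    apply intervalIntegral.continuous_parametric_intervalIntegral_of_continuous'
    refine Continuous.mul (by fun_prop) (hφ.comp_continuous (by fun_prop) ?_)
    rintro ⟨x, t⟩
    exact segment_mem hxh x.2 ⟨le_max_left _ _, max_le zero_le_one (min_le_right _ _)⟩
  convert key using 2 with x
  refine intervalIntegral.integral_congr fun t ht => ?_
  rw [uIcc_of_le zero_le_one] at ht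
  simp [ht.1, ht.2]

/-- Differentiation under the integral sign. -/
lemma hasDerivAt_radialMean {a b xh x₀ : ℝ} (hxh : xh ∈ Ioo a b) (hx₀ : x₀ ∈ Ioo a b) (j : ℕ)
    {φ : ℝ → ℝ} (hφ : DifferentiableOn ℝ φ (Ioo a b)) (hφ' : ContinuousOn (deriv φ) (Ioo a b)) :
    HasDerivAt (radialMean xh j φ) (radialMean xh (j + 1) (deriv φ) x₀) x₀ := by
  -- The derivative of `φ` is bounded on a compact subinterval around `xh` and `x₀`.
  obtain ⟨c, hac, hc⟩ := exists_between (lt_min hxh.1 hx₀.1)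
  obtain ⟨d, hd, hdb⟩ := exists_between (max_lt hxh.2 hx₀.2)
  have hsub : Icc c d ⊆ Ioo a b := fun x hx => ⟨hac.trans_le hx.1, hx.2.trans_lt hdb⟩
  have hxh' : xh ∈ Ioo c d :=
    ⟨hc.trans_le (min_le_left _ _), (le_max_left _ _).trans_lt hd⟩
  have hx₀' : x₀ ∈ Ioo c d :=
    ⟨hc.trans_le (min_le_right _ _), (le_max_right _ _).trans_lt hd⟩
  obtain ⟨C, hC⟩ := isCompact_Icc.exists_bound_of_continuousOn (hφ'.mono hsub)
  have hI : uIoc (0 : ℝ) 1 ⊆ Icc 0 1 := by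
    rw [uIoc_of_le zero_le_one]; exact Ioc_subset_Icc_self
  have hmeas : ∀ (i : ℕ) (ψ : ℝ → ℝ), ContinuousOn ψ (Ioo a b) → ∀ x ∈ Ioo a b,
      IntervalIntegrable (fun t : ℝ => t ^ i * ψ (xh + t * (x - xh)))
        MeasureTheory.volume 0 1 := by
    intro i ψ hψ x hx
    apply ContinuousOn.intervalIntegrable
    rw [uIcc_of_le zero_le_one]
    exact continuousOn_radial hxh hx i hψ
  refine (intervalIntegral.hasDerivAt_integral_of_dominated_loc_of_deriv_le
    (F := fun x t => t ^ j * φ (xh + t * (x - xh)))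
    (F' := fun x t => t ^ (j + 1) * deriv φ (xh + t * (x - xh)))
    (s := Ioo c d) (bound := fun _ => C) (isOpen_Ioo.mem_nhds hx₀') ?_ ?_ ?_ ?_ ?_ ?_).2
  · filter_upwards [isOpen_Ioo.mem_nhds hx₀] with x hx
    exact (hmeas j φ hφ.continuousOn x hx).aestronglyMeasurable_restrict_uIoc
  · exact hmeas j φ hφ.continuousOn x₀ hx₀
  · exact (hmeas (j + 1) _ hφ' x₀ hx₀).aestronglyMeasurable_restrict_uIoc
  · refine Filter.Eventually.of_forall fun t ht x hx => ?_
    have ht' := hI ht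
    have h1 := hC _ (Ioo_subset_Icc_self (segment_mem hxh' hx ht'))
    rw [norm_mul, norm_pow, Real.norm_of_nonneg ht'.1]
    calc _ ≤ 1 * ‖deriv φ (xh + t * (x - xh))‖ := by
          gcongr
          exact pow_le_one₀ ht'.1 ht'.2
      _ ≤ C := by rwa [one_mul]
  · simp
  · refine Filter.Eventually.of_forall fun t ht x hx => ?_
    have hmem := segment_mem hxh (hsub (Ioo_subset_Icc_self hx)) (hI ht)
    have h1 : HasDerivAt φ _ (xh + t * (x - xh)) :=
      ((hφ _ hmem).differentiableAt (isOpen_Ioo.mem_nhds hmem)).hasDerivAt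
    have h2 : HasDerivAt (fun x : ℝ => xh + t * (x - xh)) t x := by
      simpa using (((hasDerivAt_id x).sub_const xh).const_mul t).const_add xh
    refine ((h1.comp x h2).const_mul (t ^ j)).congr_deriv ?_
    ring

lemma contDiffOn_radialMean_nat {a b xh : ℝ} (hxh : xh ∈ Ioo a b) (n : ℕ) :
    ∀ (j : ℕ) (φ : ℝ → ℝ), ContDiffOn ℝ n φ (Ioo a b) →
      ContDiffOn ℝ n (radialMean xh j φ) (Ioo a b) := by
  induction n with
  | zero =>
    intro j φ hφ
    simp only [Nat.cast_zero, contDiffOn_zero] at hφ ⊢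
    exact continuousOn_radialMean hxh j hφ
  | succ n ih =>
    intro j φ hφ
    push_cast at hφ ⊢
    rw [contDiffOn_succ_iff_deriv_of_isOpen isOpen_Ioo] at hφ ⊢
    have hd : ∀ x ∈ Ioo a b, HasDerivAt (radialMean xh j φ)
        (radialMean xh (j + 1) (deriv φ) x) x := fun x hx =>
      hasDerivAt_radialMean hxh hx j hφ.1 hφ.2.2.continuousOn
    refine ⟨fun x hx => (hd x hx).differentiableAt.differentiableWithinAt, by simp, ?_⟩
    exact (ih (j + 1) _ hφ.2.2).congr fun x hx => (hd x hx).deriv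

lemma contDiffOn_radialMean {a b xh : ℝ} (hxh : xh ∈ Ioo a b) {n : ℕ∞} (j : ℕ) {φ : ℝ → ℝ}
    (hφ : ContDiffOn ℝ n φ (Ioo a b)) : ContDiffOn ℝ n (radialMean xh j φ) (Ioo a b) := by
  rw [contDiffOn_iff_forall_nat_le] at hφ ⊢
  exact fun k hk => contDiffOn_radialMean_nat hxh k j φ (hφ k hk)

/-- Hadamard's division lemma: a function vanishing to order `l` at `xh` is divisible by
`(x - xh)^l`, at the cost of `l` derivatives. -/
lemma exists_factor {a b xh : ℝ} (hxh : xh ∈ Ioo a b) (n : ℕ∞) (l : ℕ) :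
    ∀ f : ℝ → ℝ, ContDiffOn ℝ ((n + l : ℕ∞) : WithTop ℕ∞) f (Ioo a b) →
      (∀ k < l, iteratedDeriv k f xh = 0) →
      ∃ F : ℝ → ℝ, ContDiffOn ℝ n F (Ioo a b) ∧
        (∀ x ∈ Ioo a b, f x = (x - xh) ^ l * F x) ∧
        (l.factorial : ℝ) * F xh = iteratedDeriv l f xh := by
  induction l with
  | zero =>
    intro f hf _
    exact ⟨f, by simpa using hf, by simp, by simp⟩
  | succ l ih =>
    intro f hf hz
    have hf' : ContDiffOn ℝ (((n + l : ℕ∞) : WithTop ℕ∞) + 1) f (Ioo a b) := by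
      convert hf using 1
      push_cast
      rw [add_assoc]
    rw [contDiffOn_succ_iff_deriv_of_isOpen isOpen_Ioo] at hf'
    obtain ⟨hd, -, hC⟩ := hf'
    obtain ⟨Q, hQC, hQ, hQv⟩ := ih (deriv f) hC fun k hk => by
      rw [← iteratedDeriv_succ']
      exact hz (k + 1) (by lia)
    refine ⟨radialMean xh l Q, contDiffOn_radialMean hxh l hQC, fun x hx => ?_, ?_⟩
    · have hf0 : f xh = 0 := by simpa using hz 0 (by lia)
      have hder : ∀ t ∈ uIcc (0 : ℝ) 1, HasDerivAt (fun t : ℝ => f (xh + t * (x - xh)))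
          ((x - xh) ^ (l + 1) * (t ^ l * Q (xh + t * (x - xh)))) t := by
        intro t ht
        rw [uIcc_of_le zero_le_one] at ht
        have hmem := segment_mem hxh hx ht
        have h1 : HasDerivAt f _ (xh + t * (x - xh)) :=
          ((hd _ hmem).differentiableAt (isOpen_Ioo.mem_nhds hmem)).hasDerivAt
        have h2 : HasDerivAt (fun t : ℝ => xh + t * (x - xh)) (x - xh) t := by
          simpa using ((hasDerivAt_id t).mul_const (x - xh)).const_add xh
        refine (h1.comp t h2).congr_deriv ?_
        rw [hQ _ hmem, add_sub_cancel_left, mul_pow]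
        ring
      have hint : ContinuousOn
          (fun t : ℝ => (x - xh) ^ (l + 1) * (t ^ l * Q (xh + t * (x - xh)))) (uIcc 0 1) := by
        rw [uIcc_of_le zero_le_one]
        exact continuousOn_const.mul (continuousOn_radial hxh hx l hQC.continuousOn)
      have := intervalIntegral.integral_eq_sub_of_hasDerivAt hder hint.intervalIntegrable
      rw [intervalIntegral.integral_const_mul] at this
      simp only [one_mul, add_sub_cancel, zero_mul, add_zero, hf0, sub_zero] at this
      exact this.symm
    · have hv : radialMean xh l Q xh = Q xh / (l + 1) := by
        simp [radialMean, div_eq_inv_mul]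
      rw [hv, iteratedDeriv_succ', ← hQv, Nat.factorial_succ]
      push_cast
      field_simp

lemma eqOn_of_eq_off {a b xh : ℝ} {u v : ℝ → ℝ} (hxh : xh ∈ Ioo a b)
    (hu : ContinuousOn u (Ioo a b)) (hv : ContinuousOn v (Ioo a b))
    (h : ∀ x ∈ Ioo a b, x ≠ xh → u x = v x) : EqOn u v (Ioo a b) := by
  intro x hx
  by_cases hne : x = xh
  · subst hne
    have hn := isOpen_Ioo.mem_nhds hx
    have hu' := ((hu x hx).continuousAt hn).tendsto.mono_left (nhdsWithin_le_nhds (s := {x}ᶜ))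
    have hv' := ((hv x hx).continuousAt hn).tendsto.mono_left (nhdsWithin_le_nhds (s := {x}ᶜ))
    refine tendsto_nhds_unique (hu'.congr' ?_) hv'
    filter_upwards [nhdsWithin_le_nhds hn, self_mem_nhdsWithin] with y hy hyne
    exact h y hy hyne
  · exact h x hx hne

lemma exists_antideriv {a b xh : ℝ} {u : ℝ → ℝ} (hxh : xh ∈ Ioo a b)
    (hu : ContinuousOn u (Ioo a b)) :
    ∃ w : ℝ → ℝ, ∀ x ∈ Ioo a b, HasDerivAt w (u x) x := by
  refine ⟨fun x => ∫ t in xh..x, u t, fun x hx => ?_⟩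
  have hsub : uIcc xh x ⊆ Ioo a b := ordConnected_Ioo.uIcc_subset hxh hx
  have hn := isOpen_Ioo.mem_nhds hx
  exact intervalIntegral.integral_hasDerivAt_right (hu.mono hsub).intervalIntegrable
    (hu.stronglyMeasurableAtFilter isOpen_Ioo x hx) ((hu x hx).continuousAt hn)

lemma contDiffOn_antideriv {a b : ℝ} {n : ℕ∞} {u w : ℝ → ℝ}
    (hu : ContDiffOn ℝ n u (Ioo a b)) (hw : ∀ x ∈ Ioo a b, HasDerivAt w (u x) x) :
    ContDiffOn ℝ ((n : WithTop ℕ∞) + 1) w (Ioo a b) := by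
  rw [contDiffOn_succ_iff_deriv_of_isOpen isOpen_Ioo]
  exact ⟨fun x hx => (hw x hx).differentiableAt.differentiableWithinAt, by simp,
    hu.congr fun x hx => (hw x hx).deriv⟩

/-- **Proposition B(i) (regular case).** -/
theorem one_parameter_family
    (a b xh : ℝ) (hx : xh ∈ Ioo a b) (m : ℕ∞)
    (p q r : ℝ → ℝ) (lp lq lr : ℕ)
    (hpC : ContDiffOn ℝ m p (Ioo a b))
    (hqC : ContDiffOn ℝ m q (Ioo a b))
    (hrC : ContDiffOn ℝ m r (Ioo a b))
    (hlpm : (lp : ℕ∞) < m) (hlqm : (lq : ℕ∞) < m)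
    (hzp : HasZeroOfOrder p xh lp)
    (hzq : HasZeroOfOrder q xh lq)
    (hzr : HasZeroOfOrder r xh lr)
    (hnop : ∀ x ∈ Ioo a b, x ≠ xh → p x ≠ 0)
    (hnoq : ∀ x ∈ Ioo a b, x ≠ xh → q x ≠ 0)
    (hpq : lp ≤ lq) (hpr : lp ≤ lr) :
    -- the quotient `q/p` has a continuous extension `h` on `U`:
    (∃ h : ℝ → ℝ, ContinuousOn h (Ioo a b) ∧
      ∀ x ∈ Ioo a b, p x ≠ 0 → h x = q x / p x) ∧
    -- for every such extension `h`:
    ∀ h : ℝ → ℝ, ContinuousOn h (Ioo a b) →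
      (∀ x ∈ Ioo a b, p x ≠ 0 → h x = q x / p x) →
      -- antiderivatives `w` of `q/p` exist on `U` …
      (∃ w : ℝ → ℝ, ∀ x ∈ Ioo a b, HasDerivAt w (h x) x) ∧
      -- … and every such `w` is of class `C^{m-l_p+1}(U)`:
      ∀ w : ℝ → ℝ, (∀ x ∈ Ioo a b, HasDerivAt w (h x) x) →
        ContDiffOn ℝ (m - lp + 1) w (Ioo a b) ∧
        -- `e^w r/p` has a continuous extension `g` on `U`:
        ((∃ g : ℝ → ℝ, ContinuousOn g (Ioo a b) ∧
          ∀ x ∈ Ioo a b, p x ≠ 0 → g x = Real.exp (w x) * r x / p x) ∧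
        ∀ g : ℝ → ℝ, ContinuousOn g (Ioo a b) →
          (∀ x ∈ Ioo a b, p x ≠ 0 → g x = Real.exp (w x) * r x / p x) →
          -- antiderivatives `W` of `e^w r/p` exist on `U` …
          (∃ W : ℝ → ℝ, ∀ x ∈ Ioo a b, HasDerivAt W (g x) x) ∧
          -- … and for every such `W` the functions `e^{-w}(c + W)` are exactly the
          -- solutions, and they are of class `C^{m-l_p+1}(U)`:
          ∀ W : ℝ → ℝ, (∀ x ∈ Ioo a b, HasDerivAt W (g x) x) →
            (∀ c : ℝ,
              ContDiffOn ℝ (m - lp + 1)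
                (fun x => Real.exp (-(w x)) * (c + W x)) (Ioo a b) ∧
              ∀ x ∈ Ioo a b,
                p x * deriv (fun x => Real.exp (-(w x)) * (c + W x)) x +
                  q x * (Real.exp (-(w x)) * (c + W x)) = r x) ∧
            ∀ y : ℝ → ℝ, ContDiffOn ℝ 1 y (Ioo a b) →
              (∀ x ∈ Ioo a b, p x * deriv y x + q x * y x = r x) →
              ∃ c : ℝ, EqOn y (fun x => Real.exp (-(w x)) * (c + W x)) (Ioo a b)) := by
  have hord : ((m - lp : ℕ∞) + lp : ℕ∞) = m := tsub_add_cancel_of_le hlpm.le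
  have hcast : (m : WithTop ℕ∞) - lp = ((m - lp : ℕ∞) : WithTop ℕ∞) := by
    cases m <;> rfl
  rw [hcast]
  generalize hn : (m - lp : ℕ∞) = n at hord ⊢
  clear hcast
  rw [← hord] at hpC hqC hrC
  obtain ⟨P, hPC, hP, hPv⟩ := exists_factor hx n lp p hpC hzp.1
  obtain ⟨Q, hQC, hQ, -⟩ :=
    exists_factor hx n lp q hqC fun k hk => hzq.1 k (hk.trans_le hpq)
  obtain ⟨R, hRC, hR, -⟩ :=
    exists_factor hx n lp r hrC fun k hk => hzr.1 k (hk.trans_le hpr)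
  have hP0 : ∀ x ∈ Ioo a b, P x ≠ 0 := by
    intro x hxI h0
    by_cases hne : x = xh
    · subst hne
      exact hzp.2 (by rw [← hPv, h0, mul_zero])
    · exact hnop x hxI hne (by rw [hP x hxI, h0, mul_zero])
  -- Where `p` does not vanish, the common factor `(x - xh)^lp` cancels from quotients by `p`.
  have hcancel : ∀ x ∈ Ioo a b, p x ≠ 0 → ∀ s : ℝ,
      (x - xh) ^ lp * s / p x = s / P x := by
    intro x hxI hp0 s
    rw [hP x hxI] at hp0 ⊢
    exact mul_div_mul_left _ _ (left_ne_zero_of_mul hp0)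
  have hpc := hpC.continuousOn
  have hqc := hqC.continuousOn
  have hrc := hrC.continuousOn
  have hQP : ContDiffOn ℝ n (fun x => Q x / P x) (Ioo a b) := hQC.div hPC hP0
  refine ⟨⟨fun x => Q x / P x, hQP.continuousOn, fun x hxI hp0 => ?_⟩, ?_⟩
  · rw [hQ x hxI, hcancel x hxI hp0]
  intro h hh hhq
  have hhE : EqOn h (fun x => Q x / P x) (Ioo a b) :=
    eqOn_of_eq_off hx hh hQP.continuousOn fun x hxI hne => by
      rw [hhq x hxI (hnop x hxI hne), hQ x hxI, hcancel x hxI (hnop x hxI hne)]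
  have hph : EqOn (fun x => p x * h x) q (Ioo a b) :=
    eqOn_of_eq_off hx (hpc.mul hh) hqc fun x hxI hne => by
      have := hnop x hxI hne
      rw [hhq x hxI this]
      field_simp
  refine ⟨exists_antideriv hx hh, fun w hw => ?_⟩
  have hwC := contDiffOn_antideriv (hQP.congr hhE) hw
  have hwc : ContinuousOn w (Ioo a b) := hwC.continuousOn
  have hgC : ContDiffOn ℝ n (fun x => Real.exp (w x) * R x / P x) (Ioo a b) :=
    (((hwC.of_le le_self_add).exp).mul hRC).div hPC hP0
  have hgq : ∀ x ∈ Ioo a b, p x ≠ 0 →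
      Real.exp (w x) * R x / P x = Real.exp (w x) * r x / p x := by
    intro x hxI hp0
    rw [hR x hxI, mul_left_comm, hcancel x hxI hp0]
  refine ⟨hwC, ⟨_, hgC.continuousOn, hgq⟩, fun g hg hgr => ?_⟩
  have hgE : EqOn g (fun x => Real.exp (w x) * R x / P x) (Ioo a b) :=
    eqOn_of_eq_off hx hg hgC.continuousOn fun x hxI hne => by
      rw [hgr x hxI (hnop x hxI hne), ← hgq x hxI (hnop x hxI hne)]
  have hpg : EqOn (fun x => p x * g x) (fun x => Real.exp (w x) * r x) (Ioo a b) :=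
    eqOn_of_eq_off hx (hpc.mul hg) (hwc.rexp.mul hrc) fun x hxI hne => by
      have := hnop x hxI hne
      rw [hgr x hxI this]
      field_simp
  refine ⟨exists_antideriv hx hg, fun W hW => ⟨fun c => ⟨?_, fun x hxI => ?_⟩, fun y hyC hy => ?_⟩⟩
  · have hWC := contDiffOn_antideriv (hgC.congr hgE) hW
    exact (hwC.neg.exp).mul (contDiffOn_const.add hWC)
  · have hd : HasDerivAt (fun x => Real.exp (-(w x)) * (c + W x))
        (Real.exp (-(w x)) * -(h x) * (c + W x) + Real.exp (-(w x)) * g x) x :=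
      ((hw x hxI).fun_neg.exp).mul ((hW x hxI).const_add c)
    have e1 : p x * h x = q x := hph hxI
    have e2 : p x * g x = Real.exp (w x) * r x := hpg hxI
    have e3 : Real.exp (-(w x)) * Real.exp (w x) = 1 := by rw [← Real.exp_add]; simp
    rw [hd.deriv]
    linear_combination (-(Real.exp (-(w x)) * (c + W x))) * e1 + Real.exp (-(w x)) * e2
      + r x * e3
  · have hyd : ∀ x ∈ Ioo a b, HasDerivAt y (deriv y x) x := fun x hxI =>
      ((hyC.differentiableOn one_ne_zero x hxI).differentiableAt
        (isOpen_Ioo.mem_nhds hxI)).hasDerivAt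
    have hyc : ContinuousOn (deriv y) (Ioo a b) :=
      hyC.continuousOn_deriv_of_isOpen isOpen_Ioo le_rfl
    -- The ODE in the form `(e^w y)' = g`; dividing by `p` is legitimate only away from `xh`.
    have hode : EqOn (fun x => Real.exp (w x) * h x * y x + Real.exp (w x) * deriv y x) g
        (Ioo a b) :=
      eqOn_of_eq_off hx (((hwc.rexp.mul hh).mul hyC.continuousOn).add (hwc.rexp.mul hyc)) hg
        fun x hxI hne => by
          have e1 : p x * h x = q x := hph hxI
          have e2 : p x * g x = Real.exp (w x) * r x := hpg hxI
          apply mul_left_cancel₀ (hnop x hxI hne)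
          linear_combination Real.exp (w x) * y x * e1 - e2 + Real.exp (w x) * hy x hxI
    have hD : ∀ x ∈ Ioo a b, HasDerivAt (fun x => Real.exp (w x) * y x - W x) 0 x := by
      intro x hxI
      have := (((hw x hxI).exp).mul (hyd x hxI)).sub (hW x hxI)
      refine this.congr_deriv ?_
      rw [← hode hxI]
      exact sub_self _
    obtain ⟨c, hc⟩ := isOpen_Ioo.exists_is_const_of_deriv_eq_zero isPreconnected_Ioo
      (fun x hxI => (hD x hxI).differentiableAt.differentiableWithinAt)
      (fun x hxI => (hD x hxI).deriv)
    refine ⟨c, fun x hxI => ?_⟩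
    have e := hc x hxI
    have e3 : Real.exp (-(w x)) * Real.exp (w x) = 1 := by rw [← Real.exp_add]; simp
    linear_combination Real.exp (-(w x)) * e - y x * e3

end SingularODE16
end

section
/- (Proposition B(ii), simple singular case with positive derivative.) Consider the ODE p y′ + q y = r on U = (a,b), where p, q, r ∈ C^m(U), p has a zero of order l_p at x̂ ∈ U and q a zero of order l_q at x̂ with l_p = l_q + 1 (l_p, l_q < m), p and q have no other zeros in U, and r has a zero of order l_r ≥ l_q at x̂. Then the quotient p/q extends to a C¹ function h in a neighbourhood of x̂ with h(x̂) = 0; assume h′(x̂) > 0. Then the ODE has exactly one solution y ∈ C^{m−l_q}(U). -/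
/- Statement 17 (Proposition B(ii), simple singular case, positive derivative):
if l_p = l_q + 1, l_r ≥ l_q, and the C¹ extension h of p/q satisfies h(x̂) = 0 and
h'(x̂) > 0, then the ODE p y' + q y = r has exactly one solution y ∈ C^{m-l_q}(U). -/

/-!
Dividing `p y' + q y = r` by `q` gives the normal form `h y' + y = s` with `h = p / q` and
`s = r / q`, both of class `C^{m - lq}` once the common factor `(x - x̂)^lq` is cancelled. The proof
studies the slightly larger class `h y' + c y = s` with `c x̂ > 0`.

*Existence and uniqueness of a continuous solution.* On each side of `x̂` there is an integrating
factor `E = exp ∫ c / h`. As `h` is comparable to `x - x̂` and `c x̂ > 0`, `E → 0` at `x̂`. Hence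
homogeneous solutions, which are multiples of `1 / E`, are unbounded at `x̂` unless they vanish,
and `E⁻¹ ∫_{x̂} E s / h` is a solution, with limit `s x̂ / c x̂` at `x̂` by l'Hôpital's rule
(`exists_solution_right`, `eq_zero_right`; the left side follows by reflection).

*Regularity* (`IsSol.contDiffOn`). Formally, `z = y'` solves the equation
`h z' + (c + h') z = s' - c' y` of the same class. Its continuous solution `z` really is `y'`,
because `h z` and `s - c y` solve one and the same equation and so agree. Induction then shows that
`y` is as smooth as `h`, `c` and `s`.

*Division by powers of `x - x̂`.* If `f x̂ = 0`, the quotient `g = f / (x - x̂)` solves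
`(x - x̂) g' + g = f'`, so the regularity statement itself shows that `g` loses just one derivative
(`contDiffOn_dslope`). Iterating this cancels the common factor of `p`, `q` and `r`.
-/

open Set

namespace SingularODE17

/-- `g` has a zero of order `l` at `xh`. -/
def HasZeroOfOrder (g : ℝ → ℝ) (xh : ℝ) (l : ℕ) : Prop :=
  (∀ k < l, iteratedDeriv k g xh = 0) ∧ iteratedDeriv l g xh ≠ 0

open Filter Topology MeasureTheory

/-! ### The equation to the right of the singular point -/

/-- The integrating factor `E = exp ∫ c / h`, with base point inside the interval. It tends to `0`
at `x₀` because `c / h ≥ δ / (x - x₀)` near `x₀`, so that `log E ≤ δ log (x - x₀) + const`. -/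
lemma exists_integratingFactor {x₀ b : ℝ} {h c : ℝ → ℝ} {K : ℝ} (hb : x₀ < b)
    (hh : ContinuousOn h (Ioo x₀ b)) (hne : ∀ x ∈ Ioo x₀ b, h x ≠ 0)
    (hK : ∀ᶠ x in 𝓝[>] x₀, 0 < h x ∧ h x ≤ K * (x - x₀))
    (hc : ContinuousOn c (Ico x₀ b)) (hc0 : 0 < c x₀) :
    ∃ E : ℝ → ℝ, (∀ x, 0 < E x) ∧
      (∀ x ∈ Ioo x₀ b, HasDerivAt E (E x * (c x / h x)) x) ∧
      Tendsto E (𝓝[>] x₀) (𝓝 0) := by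
  have hcont : ContinuousOn (fun x => c x / h x) (Ioo x₀ b) :=
    (hc.mono Ioo_subset_Ico_self).div hh hne
  set x₁ := (x₀ + b) / 2 with hx₁
  have hx₁m : x₁ ∈ Ioo x₀ b := ⟨by linarith, by linarith⟩
  set G : ℝ → ℝ := fun x => ∫ t in x₁..x, c t / h t with hG
  have hGd : ∀ x ∈ Ioo x₀ b, HasDerivAt G (c x / h x) x := by
    intro x hx
    apply intervalIntegral.integral_hasDerivAt_right
    · apply ContinuousOn.intervalIntegrable
      exact hcont.mono (OrdConnected.uIcc_subset ordConnected_Ioo hx₁m hx)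
    · exact hcont.stronglyMeasurableAtFilter isOpen_Ioo x hx
    · exact hcont.continuousAt (Ioo_mem_nhds hx.1 hx.2)
  refine ⟨fun x => Real.exp (G x), fun x => Real.exp_pos _, fun x hx => (hGd x hx).exp, ?_⟩
  apply Real.tendsto_exp_atBot.comp
  have hcev : ∀ᶠ x in 𝓝[>] x₀, c x₀ / 2 < c x := by
    have : ContinuousWithinAt c (Ioi x₀) x₀ :=
      (hc x₀ ⟨le_rfl, hb⟩).mono_of_mem_nhdsWithin
        (mem_of_superset (Ioo_mem_nhdsGT hb) Ioo_subset_Ico_self)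
    exact this.eventually (lt_mem_nhds (by linarith))
  have hKpos : 0 < K := by
    obtain ⟨x, hx, hx'⟩ := (hK.and self_mem_nhdsWithin).exists
    have : 0 < x - x₀ := sub_pos.2 hx'
    by_contra hcon
    nlinarith
  set δ := c x₀ / 2 / K with hδ
  have hδpos : 0 < δ := by positivity
  have hlow : ∀ᶠ x in 𝓝[>] x₀, δ / (x - x₀) ≤ c x / h x := by
    filter_upwards [hK, hcev, self_mem_nhdsWithin] with x hx hx' hx''
    have : 0 < x - x₀ := sub_pos.2 hx''
    rw [hδ, div_div]
    gcongr
    · linarith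
    · exact hx.1
    · exact hx.2
  obtain ⟨x₂, hx₂, hlow'⟩ := (mem_nhdsGT_iff_exists_Ioo_subset).1
    (inter_mem hlow (Ioo_mem_nhdsGT hb))
  have hmono : MonotoneOn (fun x => G x - δ * Real.log (x - x₀)) (Ioo x₀ x₂) := by
    have hd : ∀ x ∈ Ioo x₀ x₂, HasDerivAt (fun x => G x - δ * Real.log (x - x₀))
        (c x / h x - δ * (1 / (x - x₀))) x := by
      intro x hx
      have h1 := ((hasDerivAt_id x).sub_const x₀).log (sub_pos.2 hx.1).ne'
      exact (hGd x (hlow' hx).2).sub (h1.const_mul δ)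
    apply monotoneOn_of_deriv_nonneg (convex_Ioo _ _)
    · exact fun x hx => (hd x hx).continuousAt.continuousWithinAt
    · rw [interior_Ioo]
      exact fun x hx => (hd x hx).differentiableAt.differentiableWithinAt
    · rw [interior_Ioo]
      intro x hx
      rw [(hd x hx).deriv, mul_one_div]
      have : δ / (x - x₀) ≤ c x / h x := (hlow' hx).1
      linarith
  have hx₂' : x₀ < x₂ := hx₂
  obtain ⟨x₃, hx₃⟩ := exists_between hx₂'
  have hlog : Tendsto (fun x => Real.log (x - x₀)) (𝓝[>] x₀) atBot := by
    apply Real.tendsto_log_nhdsGT_zero.comp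
    apply tendsto_nhdsWithin_iff.2 ⟨?_, ?_⟩
    · have : Tendsto (fun x => x - x₀) (𝓝 x₀) (𝓝 (x₀ - x₀)) := by
        exact (continuous_id.sub continuous_const).tendsto _
      rw [sub_self] at this
      exact this.mono_left nhdsWithin_le_nhds
    · filter_upwards [self_mem_nhdsWithin] with x hx
      exact sub_pos.2 (mem_Ioi.1 hx)
  have hlim : Tendsto (fun x => δ * Real.log (x - x₀) + (G x₃ - δ * Real.log (x₃ - x₀)))
      (𝓝[>] x₀) atBot :=
    tendsto_atBot_add_const_right _ _ (hlog.const_mul_atBot hδpos)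
  refine tendsto_atBot_mono' _ ?_ hlim
  filter_upwards [Ioo_mem_nhdsGT hx₃.1] with x hx
  have := hmono ⟨hx.1, hx.2.trans hx₃.2⟩ hx₃ hx.2.le
  simp only at this
  linarith

/-- The solution is `E⁻¹ ∫_{x₀} E s / h`; its limit at `x₀` comes from l'Hôpital's rule, the
quotient of the derivatives of numerator and denominator being `s / c`. -/
lemma exists_solution_right {x₀ b : ℝ} {h c s : ℝ → ℝ} {K : ℝ} (hb : x₀ < b)
    (hh : ContinuousOn h (Ioo x₀ b)) (hne : ∀ x ∈ Ioo x₀ b, h x ≠ 0)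
    (hK : ∀ᶠ x in 𝓝[>] x₀, 0 < h x ∧ h x ≤ K * (x - x₀))
    (hc : ContinuousOn c (Ico x₀ b)) (hc0 : 0 < c x₀) (hs : ContinuousOn s (Ico x₀ b)) :
    ∃ y : ℝ → ℝ, (∀ x ∈ Ioo x₀ b, HasDerivAt y ((s x - c x * y x) / h x) x) ∧
      Tendsto y (𝓝[>] x₀) (𝓝 (s x₀ / c x₀)) := by
  obtain ⟨E, hE, hEd, hE0⟩ := exists_integratingFactor hb hh hne hK hc hc0
  have hIco : Ico x₀ b ∈ 𝓝[>] x₀ := mem_of_superset (Ioo_mem_nhdsGT hb) Ioo_subset_Ico_self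
  have hcl : Tendsto c (𝓝[>] x₀) (𝓝 (c x₀)) := (hc x₀ ⟨le_rfl, hb⟩).mono_of_mem_nhdsWithin hIco
  have hsl : Tendsto s (𝓝[>] x₀) (𝓝 (s x₀)) := (hs x₀ ⟨le_rfl, hb⟩).mono_of_mem_nhdsWithin hIco
  have hscl : Tendsto (fun x => s x / c x) (𝓝[>] x₀) (𝓝 (s x₀ / c x₀)) := hsl.div hcl hc0.ne'
  have hEc : ContinuousOn E (Ioo x₀ b) := fun x hx => (hEd x hx).continuousAt.continuousWithinAt
  set f : ℝ → ℝ := fun t => E t * (s t / h t) with hf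
  have hfc : ContinuousOn f (Ioo x₀ b) :=
    hEc.mul ((hs.mono Ioo_subset_Ico_self).div hh hne)
  -- near `x₀` the integrand is `s / c` (bounded) times the derivative `E c / h ≥ 0` of `E`
  have hbd : ∀ᶠ x in 𝓝[>] x₀, |s x / c x| < |s x₀ / c x₀| + 1 :=
    hscl.abs.eventually (gt_mem_nhds (by linarith))
  have hcpos : ∀ᶠ x in 𝓝[>] x₀, 0 < c x := hcl.eventually (lt_mem_nhds hc0)
  obtain ⟨x₁, hx₁, hsub⟩ := (mem_nhdsGT_iff_exists_Ioc_subset).1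
    (inter_mem (inter_mem hbd (hcpos.and hK)) (Ioo_mem_nhdsGT hb))
  have hx₁' : x₀ < x₁ := hx₁
  have hx₁m : x₁ ∈ Ioo x₀ b := (hsub ⟨hx₁', le_rfl⟩).2
  have hEint : IntegrableOn (fun x => E x * (c x / h x)) (Ioc x₀ x₁) := by
    -- the value of `E` at `x₀` is arbitrary, so it is replaced by the limit `0`
    apply intervalIntegral.integrableOn_deriv_of_nonneg (g := Function.update E x₀ 0)
    · rw [continuousOn_update_iff]
      refine ⟨fun x hx => ?_, fun _ => ?_⟩
      · have hx' : x ∈ Ioo x₀ b :=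
          (hsub ⟨lt_of_le_of_ne hx.1.1 (Ne.symm hx.2), hx.1.2⟩).2
        exact (hEd x hx').continuousAt.continuousWithinAt
      · refine hE0.mono_left (nhdsWithin_mono _ ?_)
        intro x hx
        exact lt_of_le_of_ne hx.1.1 (Ne.symm hx.2)
    · intro x hx
      have hx' : x ∈ Ioo x₀ b := (hsub ⟨hx.1, hx.2.le⟩).2
      refine (hEd x hx').congr_of_eventuallyEq ?_
      filter_upwards [isOpen_ne.mem_nhds hx.1.ne'] with z hz
      exact Function.update_of_ne hz _ _
    · intro x hx
      have hx' := (hsub ⟨hx.1, hx.2.le⟩).1.2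
      have := hE x
      have := hx'.1
      have := hx'.2.1
      positivity
  have hfint : IntegrableOn f (Ioc x₀ x₁) := by
    refine Integrable.mono' (hEint.const_mul (|s x₀ / c x₀| + 1)) ?_ ?_
    · exact (hfc.mono fun x hx => (hsub hx).2).aestronglyMeasurable measurableSet_Ioc
    · rw [ae_restrict_iff' measurableSet_Ioc]
      refine Eventually.of_forall fun x hx => ?_
      have hx' := (hsub hx).1
      have h1 := hE x
      have h2 : 0 < c x := hx'.2.1
      have h3 : 0 < h x := hx'.2.2.1
      have h4 : |s x / c x| < |s x₀ / c x₀| + 1 := hx'.1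
      have h5 : f x = (s x / c x) * (E x * (c x / h x)) := by
        simp only [hf]; field_simp
      have h6 : 0 ≤ E x * (c x / h x) := by positivity
      rw [h5, Real.norm_eq_abs, abs_mul, abs_of_nonneg h6]
      gcongr
  have hii : ∀ x ∈ Ioo x₀ b, IntervalIntegrable f volume x₀ x := by
    intro x hx
    refine IntervalIntegrable.trans (b := x₁)
      ((intervalIntegrable_iff_integrableOn_Ioc_of_le hx₁'.le).2 hfint) ?_
    apply ContinuousOn.intervalIntegrable
    exact hfc.mono (OrdConnected.uIcc_subset ordConnected_Ioo hx₁m hx)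
  set N : ℝ → ℝ := fun x => ∫ t in x₀..x, f t with hN
  have hNd : ∀ x ∈ Ioo x₀ b, HasDerivAt N (f x) x := fun x hx =>
    intervalIntegral.integral_hasDerivAt_right (hii x hx)
      (hfc.stronglyMeasurableAtFilter isOpen_Ioo x hx)
      (hfc.continuousAt (Ioo_mem_nhds hx.1 hx.2))
  have hN0 : Tendsto N (𝓝[>] x₀) (𝓝 0) := by
    have h1 : ContinuousOn N (uIcc x₀ x₁) := by
      apply intervalIntegral.continuousOn_primitive_interval
      rw [uIcc_of_le hx₁'.le]
      exact (integrableOn_Icc_iff_integrableOn_Ioc).2 hfint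
    rw [uIcc_of_le hx₁'.le] at h1
    have h2 := (h1 x₀ ⟨le_rfl, hx₁'.le⟩).mono_of_mem_nhdsWithin
      (mem_of_superset (Ioo_mem_nhdsGT hx₁') Ioo_subset_Icc_self)
    have h3 : N x₀ = 0 := by simp [hN]
    rw [ContinuousWithinAt, h3] at h2
    exact h2
  refine ⟨fun x => N x / E x, fun x hx => ?_, ?_⟩
  · refine ((hNd x hx).div (hEd x hx) (hE x).ne').congr_deriv ?_
    have := (hE x).ne'
    have := hne x hx
    simp only [hf]
    field_simp
  · refine HasDerivAt.lhopital_zero_nhdsGT (f' := f) (g' := fun x => E x * (c x / h x))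
      ?_ ?_ ?_ hN0 hE0 ?_
    · filter_upwards [Ioo_mem_nhdsGT hb] with x hx using hNd x hx
    · filter_upwards [Ioo_mem_nhdsGT hb] with x hx using hEd x hx
    · filter_upwards [hcpos, hK] with x h1 h2
      have := hE x
      have := h2.1
      positivity
    · refine hscl.congr' ?_
      filter_upwards [hcpos, hK] with x h1 h2
      have := hE x
      have := h2.1
      simp only [hf]
      field_simp

/-- A homogeneous solution with a finite limit at `x₀` vanishes: `E u` is constant and tends
to `0`. -/
lemma eq_zero_right {x₀ b : ℝ} {h c u : ℝ → ℝ} {K L : ℝ} (hb : x₀ < b)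
    (hh : ContinuousOn h (Ioo x₀ b)) (hne : ∀ x ∈ Ioo x₀ b, h x ≠ 0)
    (hK : ∀ᶠ x in 𝓝[>] x₀, 0 < h x ∧ h x ≤ K * (x - x₀))
    (hc : ContinuousOn c (Ico x₀ b)) (hc0 : 0 < c x₀)
    (hu : ∀ x ∈ Ioo x₀ b, HasDerivAt u (-(c x * u x) / h x) x)
    (hL : Tendsto u (𝓝[>] x₀) (𝓝 L)) : ∀ x ∈ Ioo x₀ b, u x = 0 := by
  obtain ⟨E, hE, hEd, hE0⟩ := exists_integratingFactor hb hh hne hK hc hc0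
  have hd : ∀ x ∈ Ioo x₀ b, HasDerivAt (fun x => E x * u x) 0 x := by
    intro x hx
    refine ((hEd x hx).mul (hu x hx)).congr_deriv ?_
    have := hne x hx
    field_simp
    ring
  intro x hx
  have hconst : ∀ z ∈ Ioo x₀ b, E z * u z = E x * u x := fun z hz =>
    isOpen_Ioo.is_const_of_deriv_eq_zero (f := fun x => E x * u x) isPreconnected_Ioo
      (fun z hz => (hd z hz).differentiableAt.differentiableWithinAt)
      (fun z hz => (hd z hz).deriv) hz hx
  have h1 : Tendsto (fun z => E z * u z) (𝓝[>] x₀) (𝓝 (0 * L)) := hE0.mul hL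
  have h2 : Tendsto (fun z => E z * u z) (𝓝[>] x₀) (𝓝 (E x * u x)) := by
    refine tendsto_const_nhds.congr' ?_
    filter_upwards [Ioo_mem_nhdsGT hb] with z hz using (hconst z hz).symm
  have h3 := tendsto_nhds_unique h2 h1
  rw [zero_mul] at h3
  exact (mul_eq_zero.1 h3).resolve_left (hE x).ne.symm

/-! ### Existence and uniqueness across the singular point -/

/-- `h` is a `C¹` function on `(a, b)` whose only zero is `x₀`, where its derivative is positive:
the leading coefficients of the equations `h y' + c y = s` considered here. -/
structure IsSimpleSingular (a b x₀ : ℝ) (h : ℝ → ℝ) : Prop where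
  mem : x₀ ∈ Ioo a b
  contDiffOn : ContDiffOn ℝ 1 h (Ioo a b)
  zero : h x₀ = 0
  deriv_pos : 0 < deriv h x₀
  ne_zero : ∀ x ∈ Ioo a b, x ≠ x₀ → h x ≠ 0

/-- `y` is continuous on `(a, b)` and solves `h y' + c y = s` there except possibly at `x₀`. Nothing
is required at `x₀` beyond continuity; differentiability there is a consequence for `C¹` data. -/
structure IsSol (a b x₀ : ℝ) (h c s y : ℝ → ℝ) : Prop where
  cont : ContinuousOn y (Ioo a b)
  hasDerivAt : ∀ x ∈ Ioo a b, x ≠ x₀ → HasDerivAt y ((s x - c x * y x) / h x) x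

namespace IsSimpleSingular

variable {a b x₀ : ℝ} {h : ℝ → ℝ}

lemma hasDerivAt (H : IsSimpleSingular a b x₀ h) {x : ℝ} (hx : x ∈ Ioo a b) :
    HasDerivAt h (deriv h x) x :=
  (((H.contDiffOn.differentiableOn one_ne_zero) x hx).differentiableAt
    (isOpen_Ioo.mem_nhds hx)).hasDerivAt

lemma bound_right (H : IsSimpleSingular a b x₀ h) :
    ∀ᶠ x in 𝓝[>] x₀, 0 < h x ∧ h x ≤ (2 * deriv h x₀) * (x - x₀) := by
  have h1 := (hasDerivAt_iff_tendsto_slope.1 (H.hasDerivAt H.mem)).mono_left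
    (nhdsWithin_mono x₀ (fun x (hx : x ∈ Ioi x₀) => (ne_of_gt (mem_Ioi.1 hx) : x ≠ x₀)))
  have hp := H.deriv_pos
  filter_upwards [h1.eventually (lt_mem_nhds hp),
    h1.eventually (gt_mem_nhds (show deriv h x₀ < 2 * deriv h x₀ by linarith)),
    self_mem_nhdsWithin] with x hx1 hx2 hx3
  have hx3' : 0 < x - x₀ := sub_pos.2 (mem_Ioi.1 hx3)
  rw [slope_def_field, H.zero, sub_zero] at hx1 hx2
  rw [div_lt_iff₀ hx3'] at hx2
  exact ⟨by simpa [hx3'] using (lt_div_iff₀ hx3').1 hx1, hx2.le⟩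

/-- The substitution `x ↦ -x` turns `h y' + c y = s` into an equation of the same kind, with leading
coefficient `-h (-x)`. -/
lemma reflect (H : IsSimpleSingular a b x₀ h) :
    IsSimpleSingular (-b) (-a) (-x₀) (fun x => -h (-x)) where
  mem := ⟨by linarith [H.mem.2], by linarith [H.mem.1]⟩
  contDiffOn := by
    refine ContDiffOn.neg (H.contDiffOn.comp contDiff_neg.contDiffOn ?_)
    intro x hx
    exact ⟨by linarith [hx.2], by linarith [hx.1]⟩
  zero := by simp [H.zero]
  deriv_pos := by
    have : HasDerivAt (fun x => -h (-x)) (-(deriv h x₀ * (-1))) (-x₀) := by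
      have h1 : HasDerivAt h (deriv h x₀) (- -x₀) := by
        rw [neg_neg]; exact H.hasDerivAt H.mem
      exact (h1.comp (-x₀) (hasDerivAt_neg (-x₀))).neg
    rw [this.deriv]
    linarith [H.deriv_pos]
  ne_zero := by
    intro x hx hne
    refine neg_ne_zero.2 (H.ne_zero _ ⟨by linarith [hx.2], by linarith [hx.1]⟩ ?_)
    intro h; apply hne; linarith

lemma exists_right (H : IsSimpleSingular a b x₀ h) {c s : ℝ → ℝ}
    (hc : ContinuousOn c (Ioo a b)) (hc0 : 0 < c x₀) (hs : ContinuousOn s (Ioo a b)) :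
    ∃ y : ℝ → ℝ, (∀ x ∈ Ioo x₀ b, HasDerivAt y ((s x - c x * y x) / h x) x) ∧
      Tendsto y (𝓝[>] x₀) (𝓝 (s x₀ / c x₀)) := by
  have hsub : Ico x₀ b ⊆ Ioo a b := fun x hx => ⟨H.mem.1.trans_le hx.1, hx.2⟩
  have hsub' : Ioo x₀ b ⊆ Ioo a b := fun x hx => hsub ⟨hx.1.le, hx.2⟩
  exact exists_solution_right H.mem.2 (H.contDiffOn.continuousOn.mono hsub')
    (fun x hx => H.ne_zero x (hsub' hx) hx.1.ne') H.bound_right (hc.mono hsub) hc0 (hs.mono hsub)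

lemma eq_right (H : IsSimpleSingular a b x₀ h) {c s y₁ y₂ : ℝ → ℝ}
    (hc : ContinuousOn c (Ioo a b)) (hc0 : 0 < c x₀)
    (h₁ : IsSol a b x₀ h c s y₁) (h₂ : IsSol a b x₀ h c s y₂) :
    ∀ x ∈ Ioo x₀ b, y₁ x = y₂ x := by
  have hsub : Ico x₀ b ⊆ Ioo a b := fun x hx => ⟨H.mem.1.trans_le hx.1, hx.2⟩
  have hsub' : Ioo x₀ b ⊆ Ioo a b := fun x hx => hsub ⟨hx.1.le, hx.2⟩
  have hU : Ioo a b ∈ 𝓝 x₀ := isOpen_Ioo.mem_nhds H.mem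
  have := eq_zero_right (u := fun x => y₁ x - y₂ x) (L := y₁ x₀ - y₂ x₀) H.mem.2
    (H.contDiffOn.continuousOn.mono hsub')
    (fun x hx => H.ne_zero x (hsub' hx) hx.1.ne') H.bound_right (hc.mono hsub) hc0
    (fun x hx => ((h₁.hasDerivAt x (hsub' hx) hx.1.ne').sub
      (h₂.hasDerivAt x (hsub' hx) hx.1.ne')).congr_deriv (by ring))
    (((h₁.cont.continuousAt hU).sub (h₂.cont.continuousAt hU)).tendsto.mono_left
      nhdsWithin_le_nhds)
  exact fun x hx => sub_eq_zero.1 (this x hx)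

end IsSimpleSingular

section

variable {a b x₀ : ℝ} {h c s : ℝ → ℝ}

lemma continuousOn_reflect {f : ℝ → ℝ} (hf : ContinuousOn f (Ioo a b)) :
    ContinuousOn (fun x => f (-x)) (Ioo (-b) (-a)) :=
  hf.comp continuousOn_neg fun x hx => ⟨by linarith [hx.2], by linarith [hx.1]⟩

lemma IsSol.reflect {y : ℝ → ℝ} (hy : IsSol a b x₀ h c s y) :
    IsSol (-b) (-a) (-x₀) (fun x => -h (-x)) (fun x => c (-x)) (fun x => s (-x))
      (fun x => y (-x)) where
  cont := continuousOn_reflect hy.cont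
  hasDerivAt x hx hne := by
    have h1 := hy.hasDerivAt (-x) ⟨by linarith [hx.2], by linarith [hx.1]⟩
      (by intro h; apply hne; linarith)
    refine (h1.comp x (hasDerivAt_neg x)).congr_deriv ?_
    rw [div_neg, mul_neg_one]

lemma IsSimpleSingular.unique (H : IsSimpleSingular a b x₀ h) {y₁ y₂ : ℝ → ℝ}
    (hc : ContinuousOn c (Ioo a b)) (hc0 : 0 < c x₀)
    (h₁ : IsSol a b x₀ h c s y₁) (h₂ : IsSol a b x₀ h c s y₂) :
    EqOn y₁ y₂ (Ioo a b) := by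
  have hr := H.eq_right hc hc0 h₁ h₂
  have hl := H.reflect.eq_right (continuousOn_reflect hc) (by simpa using hc0)
    h₁.reflect h₂.reflect
  intro x hx
  rcases lt_trichotomy x x₀ with hlt | rfl | hgt
  · simpa using hl (-x) ⟨by linarith, by linarith [hx.1]⟩
  · have t₁ := ((h₁.cont x hx).continuousAt (isOpen_Ioo.mem_nhds hx)).tendsto.mono_left
      (nhdsWithin_le_nhds (s := Ioi x))
    have t₂ := ((h₂.cont x hx).continuousAt (isOpen_Ioo.mem_nhds hx)).tendsto.mono_left
      (nhdsWithin_le_nhds (s := Ioi x))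
    refine tendsto_nhds_unique t₁ (t₂.congr' ?_)
    filter_upwards [Ioo_mem_nhdsGT hx.2] with z hz using (hr z hz).symm
  · exact hr x ⟨hgt, hx.2⟩

/-- The two one-sided solutions have the same limit `s x₀ / c x₀` and so glue continuously. -/
lemma IsSimpleSingular.exists_isSol (H : IsSimpleSingular a b x₀ h)
    (hc : ContinuousOn c (Ioo a b)) (hc0 : 0 < c x₀) (hs : ContinuousOn s (Ioo a b)) :
    ∃ y, IsSol a b x₀ h c s y := by
  obtain ⟨yr, hyr, hyr0⟩ := H.exists_right hc hc0 hs
  obtain ⟨yl, hyl, hyl0⟩ := H.reflect.exists_right (continuousOn_reflect hc)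
    (by simpa using hc0) (continuousOn_reflect hs)
  simp only [neg_neg] at hyl0
  set y : ℝ → ℝ := fun x => if x < x₀ then yl (-x) else if x = x₀ then s x₀ / c x₀ else yr x
    with hy
  have ey_l : ∀ x, x < x₀ → y x = yl (-x) := fun x hx => by simp [hy, hx]
  have ey_r : ∀ x, x₀ < x → y x = yr x := fun x hx => by simp [hy, hx.not_gt, hx.ne']
  have ey_0 : y x₀ = s x₀ / c x₀ := by simp [hy]
  have hd : ∀ x ∈ Ioo a b, x ≠ x₀ → HasDerivAt y ((s x - c x * y x) / h x) x := by
    intro x hx hne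
    rcases lt_or_gt_of_ne hne with hlt | hgt
    · have h1 := hyl (-x) ⟨by linarith, by linarith [hx.1]⟩
      simp only [neg_neg] at h1
      have h2 : HasDerivAt (fun x => yl (-x)) ((s x - c x * y x) / h x) x := by
        refine (h1.comp x (hasDerivAt_neg x)).congr_deriv ?_
        rw [div_neg, mul_neg_one, neg_neg, ey_l x hlt]
      refine h2.congr_of_eventuallyEq ?_
      filter_upwards [isOpen_Iio.mem_nhds hlt] with z hz using ey_l z hz
    · have h2 := hyr x ⟨hgt, hx.2⟩
      rw [← ey_r x hgt] at h2
      refine h2.congr_of_eventuallyEq ?_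
      filter_upwards [isOpen_Ioi.mem_nhds hgt] with z hz using ey_r z hz
  refine ⟨y, fun x hx => ?_, hd⟩
  by_cases hne : x = x₀
  · subst hne
    refine ContinuousAt.continuousWithinAt ?_
    rw [continuousAt_iff_continuous_left'_right']
    constructor
    · rw [ContinuousWithinAt, ey_0]
      have h1 : Tendsto (fun z : ℝ => -z) (𝓝[<] x) (𝓝[>] (-x)) := tendsto_neg_nhdsLT
      refine (hyl0.comp h1).congr' ?_
      filter_upwards [self_mem_nhdsWithin] with z hz using (ey_l z hz).symm
    · rw [ContinuousWithinAt, ey_0]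
      refine hyr0.congr' ?_
      filter_upwards [self_mem_nhdsWithin] with z hz using (ey_r z hz).symm
  · exact (hd x hx hne).continuousAt.continuousWithinAt

end

/-! ### Regularity of the continuous solution -/

section

variable {a b x₀ : ℝ} {h c s : ℝ → ℝ}

lemma hasDerivAt_of_contDiffOn_one {f : ℝ → ℝ} (hf : ContDiffOn ℝ 1 f (Ioo a b)) {x : ℝ}
    (hx : x ∈ Ioo a b) : HasDerivAt f (deriv f x) x :=
  ((hf.differentiableOn one_ne_zero x hx).differentiableAt (isOpen_Ioo.mem_nhds hx)).hasDerivAt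

lemma continuousOn_deriv_of_contDiffOn_one {f : ℝ → ℝ} (hf : ContDiffOn ℝ 1 f (Ioo a b)) :
    ContinuousOn (deriv f) (Ioo a b) :=
  hf.continuousOn_deriv_of_isOpen isOpen_Ioo le_rfl

/-- A local version of `hasDerivAt_of_hasDerivAt_of_ne`. -/
lemma hasDerivAt_of_punctured {f g : ℝ → ℝ} (hx₀ : x₀ ∈ Ioo a b)
    (hd : ∀ x ∈ Ioo a b, x ≠ x₀ → HasDerivAt f (g x) x)
    (hf : ContinuousAt f x₀) (hg : ContinuousAt g x₀) : HasDerivAt f (g x₀) x₀ := by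
  have hr : HasDerivWithinAt f (g x₀) (Ici x₀) x₀ := by
    refine hasDerivWithinAt_Ici_of_tendsto_deriv (s := Ioo x₀ b)
      (fun x hx => (hd x ⟨hx₀.1.trans hx.1, hx.2⟩ hx.1.ne').differentiableAt.differentiableWithinAt)
      hf.continuousWithinAt (Ioo_mem_nhdsGT hx₀.2) ?_
    refine (hg.tendsto.mono_left nhdsWithin_le_nhds).congr' ?_
    filter_upwards [Ioo_mem_nhdsGT hx₀.2] with x hx
    exact (hd x ⟨hx₀.1.trans hx.1, hx.2⟩ hx.1.ne').deriv.symm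
  have hl : HasDerivWithinAt f (g x₀) (Iic x₀) x₀ := by
    refine hasDerivWithinAt_Iic_of_tendsto_deriv (s := Ioo a x₀)
      (fun x hx => (hd x ⟨hx.1, hx.2.trans hx₀.2⟩ hx.2.ne).differentiableAt.differentiableWithinAt)
      hf.continuousWithinAt (Ioo_mem_nhdsLT hx₀.1) ?_
    refine (hg.tendsto.mono_left nhdsWithin_le_nhds).congr' ?_
    filter_upwards [Ioo_mem_nhdsLT hx₀.1] with x hx
    exact (hd x ⟨hx.1, hx.2.trans hx₀.2⟩ hx.2.ne).deriv.symm
  simpa using hl.union hr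

/-- The continuous solution `y` is differentiable also at `x₀`, and its derivative solves the
equation obtained by differentiating `h y' + c y = s`. -/
lemma IsSol.exists_deriv_isSol (H : IsSimpleSingular a b x₀ h) {y : ℝ → ℝ}
    (hc : ContDiffOn ℝ 1 c (Ioo a b)) (hc0 : 0 < c x₀) (hs : ContDiffOn ℝ 1 s (Ioo a b))
    (hy : IsSol a b x₀ h c s y) :
    ∃ z, IsSol a b x₀ h (fun x => c x + deriv h x) (fun x => deriv s x - deriv c x * y x) z ∧
      ∀ x ∈ Ioo a b, HasDerivAt y (z x) x := by
  have hh' := continuousOn_deriv_of_contDiffOn_one H.contDiffOn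
  have hc' := continuousOn_deriv_of_contDiffOn_one hc
  have hs' := continuousOn_deriv_of_contDiffOn_one hs
  obtain ⟨z, hz⟩ := H.exists_isSol (c := fun x => c x + deriv h x)
    (s := fun x => deriv s x - deriv c x * y x) (hc.continuousOn.add hh')
    (by linarith [H.deriv_pos]) (hs'.sub (hc'.mul hy.cont))
  -- both `s - c y` and `h z` solve `h w' + c w = h (s' - c' y)`
  have hw : IsSol a b x₀ h c (fun x => h x * (deriv s x - deriv c x * y x))
      (fun x => s x - c x * y x) := by
    refine ⟨hs.continuousOn.sub (hc.continuousOn.mul hy.cont), fun x hx hne => ?_⟩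
    have h0 := H.ne_zero x hx hne
    refine ((hasDerivAt_of_contDiffOn_one hs hx).sub
      ((hasDerivAt_of_contDiffOn_one hc hx).mul (hy.hasDerivAt x hx hne))).congr_deriv ?_
    field_simp
    ring
  have hv : IsSol a b x₀ h c (fun x => h x * (deriv s x - deriv c x * y x))
      (fun x => h x * z x) := by
    refine ⟨H.contDiffOn.continuousOn.mul hz.cont, fun x hx hne => ?_⟩
    have h0 := H.ne_zero x hx hne
    refine ((H.hasDerivAt hx).mul (hz.hasDerivAt x hx hne)).congr_deriv ?_
    field_simp
    ring
  have heq := H.unique hc.continuousOn hc0 hw hv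
  have hne' : ∀ x ∈ Ioo a b, x ≠ x₀ → HasDerivAt y (z x) x := by
    intro x hx hne
    refine (hy.hasDerivAt x hx hne).congr_deriv ?_
    have h1 : s x - c x * y x = h x * z x := heq hx
    rw [h1, mul_div_cancel_left₀ _ (H.ne_zero x hx hne)]
  refine ⟨z, hz, fun x hx => ?_⟩
  by_cases hne : x = x₀
  · subst hne
    exact hasDerivAt_of_punctured hx hne' (hy.cont.continuousAt (isOpen_Ioo.mem_nhds hx))
      (hz.cont.continuousAt (isOpen_Ioo.mem_nhds hx))
  · exact hne' x hx hne

lemma contDiffOn_deriv_nat {f : ℝ → ℝ} {k : ℕ}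
    (hf : ContDiffOn ℝ ((k + 1 : ℕ) : WithTop ℕ∞) f (Ioo a b)) :
    ContDiffOn ℝ k (deriv f) (Ioo a b) :=
  hf.deriv_of_isOpen isOpen_Ioo (by push_cast; exact le_rfl)

/-- The continuous solution is as smooth as the data. In the induction step the differentiated
equation has coefficient `c + h'` and right-hand side `s' - c' y`, of one order less. -/
theorem IsSol.contDiffOn (H : IsSimpleSingular a b x₀ h) (k : ℕ) :
    ∀ {c s y : ℝ → ℝ}, ContDiffOn ℝ k h (Ioo a b) → ContDiffOn ℝ k c (Ioo a b) → 0 < c x₀ →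
      ContDiffOn ℝ k s (Ioo a b) → IsSol a b x₀ h c s y → ContDiffOn ℝ k y (Ioo a b) := by
  induction k with
  | zero =>
    intro c s y _ _ _ _ hy
    exact contDiffOn_zero.2 hy.cont
  | succ k ih =>
    intro c s y hh hc hc0 hs hy
    have hle : ((k : ℕ) : WithTop ℕ∞) ≤ ((k + 1 : ℕ) : WithTop ℕ∞) := by
      exact_mod_cast Nat.le_succ k
    have h1le : (1 : WithTop ℕ∞) ≤ ((k + 1 : ℕ) : WithTop ℕ∞) := by
      exact_mod_cast Nat.le_add_left 1 k
    obtain ⟨z, hz, hyz⟩ := hy.exists_deriv_isSol H (hc.of_le h1le) hc0 (hs.of_le h1le)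
    have hyk : ContDiffOn ℝ k y (Ioo a b) :=
      ih (hh.of_le hle) (hc.of_le hle) hc0 (hs.of_le hle) hy
    have hzk : ContDiffOn ℝ k z (Ioo a b) :=
      ih (hh.of_le hle) ((hc.of_le hle).add (contDiffOn_deriv_nat hh))
        (by linarith [H.deriv_pos])
        ((contDiffOn_deriv_nat hs).sub ((contDiffOn_deriv_nat hc).mul hyk)) hz
    rw [show ((k + 1 : ℕ) : WithTop ℕ∞) = (k : WithTop ℕ∞) + 1 by push_cast; rfl,
      contDiffOn_succ_iff_deriv_of_isOpen isOpen_Ioo]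
    refine ⟨fun x hx => (hyz x hx).differentiableAt.differentiableWithinAt, ?_,
      hzk.congr fun x hx => (hyz x hx).deriv⟩
    intro htop
    exact absurd htop (by exact_mod_cast (WithTop.coe_ne_top (a := (k : ℕ∞))))

end

/-! ### Division by powers of `x - x₀` -/

section

variable {a b x₀ : ℝ}

lemma isSimpleSingular_sub (hx₀ : x₀ ∈ Ioo a b) :
    IsSimpleSingular a b x₀ (fun x => x - x₀) where
  mem := hx₀
  contDiffOn := (contDiff_id.sub contDiff_const).contDiffOn
  zero := sub_self _
  deriv_pos := by simp
  ne_zero x _ hne := sub_ne_zero.2 hne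

lemma sub_mul_dslope {f : ℝ → ℝ} (hf0 : f x₀ = 0) (x : ℝ) :
    (x - x₀) * dslope f x₀ x = f x := by
  simpa [hf0] using sub_smul_dslope f x₀ x

/-- The quotient `g = f / (x - x₀)` solves `(x - x₀) g' + g = f'`, so it is as smooth as `f'`. -/
lemma contDiffOn_dslope (hx₀ : x₀ ∈ Ioo a b) {f : ℝ → ℝ} {k : ℕ}
    (hf : ContDiffOn ℝ ((k + 1 : ℕ) : WithTop ℕ∞) f (Ioo a b)) (hf0 : f x₀ = 0) :
    ContDiffOn ℝ k (dslope f x₀) (Ioo a b) := by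
  have hf1 : ContDiffOn ℝ 1 f (Ioo a b) := hf.of_le (by exact_mod_cast Nat.le_add_left 1 k)
  have hsol : IsSol a b x₀ (fun x => x - x₀) (fun _ => 1) (deriv f) (dslope f x₀) := by
    refine ⟨(continuousOn_dslope (isOpen_Ioo.mem_nhds hx₀)).2
      ⟨hf.continuousOn, (hasDerivAt_of_contDiffOn_one hf1 hx₀).differentiableAt⟩,
      fun x hx hne => ?_⟩
    have h0 : x - x₀ ≠ 0 := sub_ne_zero.2 hne
    have h1 : HasDerivAt (fun x => f x / (x - x₀))
        ((deriv f x * (x - x₀) - f x * 1) / (x - x₀) ^ 2) x :=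
      (hasDerivAt_of_contDiffOn_one hf1 hx).div ((hasDerivAt_id x).sub_const x₀) h0
    refine (h1.congr_of_eventuallyEq ?_).congr_deriv ?_
    · filter_upwards [isOpen_ne.mem_nhds hne] with w hw
      rw [← sub_mul_dslope hf0 w, mul_div_cancel_left₀ _ (sub_ne_zero.2 hw)]
    · rw [← sub_mul_dslope hf0 x]
      field_simp
  exact hsol.contDiffOn (isSimpleSingular_sub hx₀) k
    (contDiff_id.sub contDiff_const).contDiffOn contDiff_const.contDiffOn one_pos
    (contDiffOn_deriv_nat hf)

lemma differentiableAt_iteratedDeriv {g : ℝ → ℝ} {j : ℕ} {n : ℕ} (hjn : j < n)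
    (hg : ContDiffOn ℝ n g (Ioo a b)) {x : ℝ} (hx : x ∈ Ioo a b) :
    DifferentiableAt ℝ (iteratedDeriv j g) x := by
  have h1 := hg.differentiableOn_iteratedDerivWithin (m := j) (by exact_mod_cast hjn)
    isOpen_Ioo.uniqueDiffOn x hx
  refine (h1.differentiableAt (isOpen_Ioo.mem_nhds hx)).congr_of_eventuallyEq ?_
  filter_upwards [isOpen_Ioo.mem_nhds hx] with w hw
  exact (iteratedDerivWithin_of_isOpen isOpen_Ioo hw).symm

/-- Leibniz' rule for a product with `x - x₀`. For `j = 0` the truncated index `j - 1` is harmless,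
its coefficient being `0`. -/
lemma iteratedDeriv_sub_mul {g : ℝ → ℝ} (j : ℕ) (hg : ContDiffOn ℝ j g (Ioo a b)) :
    ∀ x ∈ Ioo a b, iteratedDeriv j (fun x => (x - x₀) * g x) x =
      (x - x₀) * iteratedDeriv j g x + j * iteratedDeriv (j - 1) g x := by
  induction j with
  | zero => intro x _; simp
  | succ j ih =>
    intro x hx
    have ih' := ih (hg.of_le (by exact_mod_cast Nat.le_succ j))
    rw [iteratedDeriv_succ]
    have hev : iteratedDeriv j (fun x => (x - x₀) * g x) =ᶠ[𝓝 x] fun x =>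
        (x - x₀) * iteratedDeriv j g x + j * iteratedDeriv (j - 1) g x := by
      filter_upwards [isOpen_Ioo.mem_nhds hx] with w hw using ih' w hw
    rw [hev.deriv_eq]
    have h1 := (differentiableAt_iteratedDeriv (Nat.lt_succ_self j) hg hx).hasDerivAt
    rw [← iteratedDeriv_succ] at h1
    have h2 := (differentiableAt_iteratedDeriv (j := j - 1) (by omega) hg hx).hasDerivAt
    rw [← iteratedDeriv_succ] at h2
    have h3 : (j : ℝ) * iteratedDeriv (j - 1 + 1) g x = j * iteratedDeriv j g x := by
      rcases j with _ | j <;> simp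
    have h4 := (((hasDerivAt_id x).sub_const x₀).mul h1).add (h2.const_mul (j : ℝ))
    rw [h3] at h4
    refine (HasDerivAt.deriv h4).trans ?_
    simp only [id, Nat.add_sub_cancel]
    push_cast
    ring

lemma iteratedDeriv_succ_eq_dslope (hx₀ : x₀ ∈ Ioo a b) {f : ℝ → ℝ} {j n : ℕ} (hjn : j + 2 ≤ n)
    (hf : ContDiffOn ℝ n f (Ioo a b)) (hf0 : f x₀ = 0) :
    iteratedDeriv (j + 1) f x₀ = (j + 1) * iteratedDeriv j (dslope f x₀) x₀ := by
  have hg : ContDiffOn ℝ ((j + 1 : ℕ) : WithTop ℕ∞) (dslope f x₀) (Ioo a b) :=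
    contDiffOn_dslope hx₀ (hf.of_le (by exact_mod_cast hjn)) hf0
  have h1 := iteratedDeriv_sub_mul (x₀ := x₀) (j + 1) hg x₀ hx₀
  rw [funext (sub_mul_dslope hf0)] at h1
  rw [h1]
  simp

/-- The quotient of `f` by `(x - x₀) ^ l`, continued to `x₀`, as an iterated divided slope. It has
this meaning when the derivatives of `f` of order less than `l` vanish at `x₀`; see
`divPow_spec`. -/
noncomputable def divPow (x₀ : ℝ) (l : ℕ) (f : ℝ → ℝ) : ℝ → ℝ := (fun g => dslope g x₀)^[l] f

lemma divPow_spec (hx₀ : x₀ ∈ Ioo a b) (l k : ℕ) : ∀ {f : ℝ → ℝ},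
    ContDiffOn ℝ ((k + l : ℕ) : WithTop ℕ∞) f (Ioo a b) →
    (∀ j < l, iteratedDeriv j f x₀ = 0) →
    ContDiffOn ℝ k (divPow x₀ l f) (Ioo a b) ∧
      (∀ x, f x = (x - x₀) ^ l * divPow x₀ l f x) ∧
      (0 < k → iteratedDeriv l f x₀ ≠ 0 → divPow x₀ l f x₀ ≠ 0) := by
  induction l with
  | zero =>
    intro f hf _
    exact ⟨hf, fun x => by simp [divPow], fun _ h => by simpa [divPow] using h⟩
  | succ l ih =>
    intro f hf hz
    have hf0 : f x₀ = 0 := by simpa using hz 0 (Nat.succ_pos l)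
    obtain ⟨h1, h2, h3⟩ := ih (f := dslope f x₀)
      (contDiffOn_dslope hx₀ (k := k + l) hf hf0) (fun j hj => by
        have h4 := iteratedDeriv_succ_eq_dslope hx₀ (j := j) (n := k + (l + 1)) (by omega) hf hf0
        rw [hz (j + 1) (by omega)] at h4
        exact (mul_eq_zero.1 h4.symm).resolve_left (by positivity))
    refine ⟨h1, fun x => ?_, fun hk hl => h3 hk ?_⟩
    · rw [← sub_mul_dslope hf0 x, h2 x, pow_succ']
      simp only [divPow, Function.iterate_succ_apply]
      ring
    · intro h5
      apply hl
      rw [iteratedDeriv_succ_eq_dslope hx₀ (n := k + (l + 1)) (by omega) hf hf0, h5, mul_zero]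

end

/-! ### The original equation -/

/-- **Proposition B(ii).** -/
theorem unique_solution
    (a b xh : ℝ) (hx : xh ∈ Ioo a b) (m : ℕ∞)
    (p q r : ℝ → ℝ) (lp lq lr : ℕ)
    (hpC : ContDiffOn ℝ m p (Ioo a b))
    (hqC : ContDiffOn ℝ m q (Ioo a b))
    (hrC : ContDiffOn ℝ m r (Ioo a b))
    (hlpm : (lp : ℕ∞) < m) (hlqm : (lq : ℕ∞) < m)
    (hzp : HasZeroOfOrder p xh lp)
    (hzq : HasZeroOfOrder q xh lq)
    (hzr : HasZeroOfOrder r xh lr)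
    (hnop : ∀ x ∈ Ioo a b, x ≠ xh → p x ≠ 0)
    (hnoq : ∀ x ∈ Ioo a b, x ≠ xh → q x ≠ 0)
    (hl : lp = lq + 1) (hlr : lq ≤ lr)
    -- the C¹ extension `h` of `p/q` near `xh`, with `h(xh) = 0`:
    (h : ℝ → ℝ)
    (hhC : ContDiffOn ℝ 1 h (Ioo a b))
    (hhq : ∀ x ∈ Ioo a b, q x ≠ 0 → h x = p x / q x)
    (hh0 : h xh = 0)
    -- positive derivative at the singular point:
    (hh' : 0 < deriv h xh) :
    ∃ y : ℝ → ℝ,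
      (ContDiffOn ℝ (m - lq) y (Ioo a b) ∧
        ∀ x ∈ Ioo a b, p x * deriv y x + q x * y x = r x) ∧
      ∀ y' : ℝ → ℝ, ContDiffOn ℝ (m - lq) y' (Ioo a b) →
        (∀ x ∈ Ioo a b, p x * deriv y' x + q x * y' x = r x) →
        EqOn y' y (Ioo a b) := by
  have hU : Ioo a b ∈ 𝓝 xh := isOpen_Ioo.mem_nhds hx
  have hcast : ((m : WithTop ℕ∞) - (lq : WithTop ℕ∞)) = ((m - lq : ℕ∞) : WithTop ℕ∞) := by
    norm_cast
  rw [hcast]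
  have hk_le : ∀ k : ℕ, (k : ℕ∞) ≤ m - lq → ((k + lq : ℕ) : WithTop ℕ∞) ≤ m := by
    intro k hk
    have h1 : ((k + lq : ℕ) : ℕ∞) ≤ m := by
      push_cast
      calc (k : ℕ∞) + lq ≤ (m - lq) + lq := by gcongr
        _ = m := tsub_add_cancel_of_le hlqm.le
    exact_mod_cast h1
  have h1m : ((1 : ℕ) : ℕ∞) ≤ m - lq := by
    apply ENat.le_sub_of_add_le_left (ENat.natCast_ne_top lq)
    have h1 : ((lq + 1 : ℕ) : ℕ∞) ≤ m := hl ▸ hlpm.le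
    exact_mod_cast h1
  have Dp := fun k hk => divPow_spec hx lq k (hpC.of_le (hk_le k hk))
    (fun j hj => hzp.1 j (by omega))
  have Dq := fun k hk => divPow_spec hx lq k (hqC.of_le (hk_le k hk)) hzq.1
  have Dr := fun k hk => divPow_spec hx lq k (hrC.of_le (hk_le k hk))
    (fun j hj => hzr.1 j (by omega))
  set P := divPow xh lq p with hP
  set Q := divPow xh lq q with hQ
  set R := divPow xh lq r with hR
  have eP := (Dp 1 h1m).2.1
  have eQ := (Dq 1 h1m).2.1
  have eR := (Dr 1 h1m).2.1
  have hQne : ∀ x ∈ Ioo a b, Q x ≠ 0 := by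
    intro x hxU
    by_cases hne : x = xh
    · rw [hne]
      exact (Dq 1 h1m).2.2 one_pos hzq.2
    · intro h0
      exact hnoq x hxU hne (by rw [eQ x, h0, mul_zero])
  have hPQ : ∀ x ∈ Ioo a b, x ≠ xh → h x = P x / Q x := by
    intro x hxU hne
    have h1 : (x - xh) ^ lq ≠ 0 := pow_ne_zero _ (sub_ne_zero.2 hne)
    rw [hhq x hxU (hnoq x hxU hne), eP x, eQ x, mul_div_mul_left _ _ h1]
  have hPc := (Dp 1 h1m).1.continuousOn
  have hQc := (Dq 1 h1m).1.continuousOn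
  -- functions continuous on the interval that agree off `xh` agree at `xh`
  have hext : ∀ {f g : ℝ → ℝ}, ContinuousOn f (Ioo a b) → ContinuousOn g (Ioo a b) →
      (∀ x ∈ Ioo a b, x ≠ xh → f x = g x) → ∀ x ∈ Ioo a b, f x = g x := by
    intro f g hf hg hfg x hxU
    by_cases hne : x = xh
    · subst hne
      have t₁ := (hf.continuousAt hU).tendsto.mono_left (nhdsWithin_le_nhds (s := Ioi x))
      have t₂ := (hg.continuousAt hU).tendsto.mono_left (nhdsWithin_le_nhds (s := Ioi x))
      refine tendsto_nhds_unique t₁ (t₂.congr' ?_)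
      filter_upwards [Ioo_mem_nhdsGT hx.2] with z hz
      exact (hfg z ⟨hx.1.trans hz.1, hz.2⟩ hz.1.ne').symm
    · exact hfg x hxU hne
  have hhPQ : ∀ x ∈ Ioo a b, h x = P x / Q x :=
    hext hhC.continuousOn (hPc.div hQc hQne) hPQ
  have H : IsSimpleSingular a b xh h := by
    refine ⟨hx, hhC, hh0, hh', fun x hxU hne => ?_⟩
    rw [hhq x hxU (hnoq x hxU hne)]
    exact div_ne_zero (hnop x hxU hne) (hnoq x hxU hne)
  have hsC : ∀ k : ℕ, (k : ℕ∞) ≤ m - lq → ContDiffOn ℝ k (fun x => R x / Q x) (Ioo a b) :=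
    fun k hk => (Dr k hk).1.div (Dq k hk).1 hQne
  have hone : ContinuousOn (fun _ : ℝ => (1 : ℝ)) (Ioo a b) := continuousOn_const
  obtain ⟨y, hy⟩ := H.exists_isSol hone one_pos (hsC 1 h1m).continuousOn
  have hyC : ContDiffOn ℝ ((m - lq : ℕ∞) : WithTop ℕ∞) y (Ioo a b) := by
    rw [contDiffOn_iff_forall_nat_le]
    intro k hk
    exact hy.contDiffOn H k (((Dp k hk).1.div (Dq k hk).1 hQne).congr hhPQ) contDiffOn_const
      one_pos (hsC k hk)
  have h_one_le : (1 : WithTop ℕ∞) ≤ ((m - lq : ℕ∞) : WithTop ℕ∞) := by exact_mod_cast h1m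
  have hrq : ∀ x ∈ Ioo a b, x ≠ xh → R x / Q x = r x / q x := by
    intro x hxU hne
    have h1 : (x - xh) ^ lq ≠ 0 := pow_ne_zero _ (sub_ne_zero.2 hne)
    rw [eR x, eQ x, mul_div_mul_left _ _ h1]
  refine ⟨y, ⟨hyC, ?_⟩, ?_⟩
  · have hyC1 := hyC.of_le h_one_le
    -- at `xh` the equation holds by continuity, since `y` is `C¹`
    refine hext ((hpC.continuousOn.mul (continuousOn_deriv_of_contDiffOn_one hyC1)).add
      (hqC.continuousOn.mul hyC1.continuousOn)) hrC.continuousOn fun x hxU hne => ?_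
    rw [(hy.hasDerivAt x hxU hne).deriv, hrq x hxU hne, hhq x hxU (hnoq x hxU hne)]
    have hp0 := hnop x hxU hne
    have hq0 := hnoq x hxU hne
    field_simp
    ring
  · intro u huC hu
    have huC1 := huC.of_le h_one_le
    refine H.unique hone one_pos ⟨huC1.continuousOn, fun x hxU hne => ?_⟩ hy
    refine (hasDerivAt_of_contDiffOn_one huC1 hxU).congr_deriv ?_
    rw [hrq x hxU hne, hhq x hxU (hnoq x hxU hne), ← hu x hxU]
    have hp0 := hnop x hxU hne
    have hq0 := hnoq x hxU hne
    field_simp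
    ring

end SingularODE17
end

section
/- (Proposition B(iv)-(v), even-order singular case.) Consider the ODE p y′ + q y = r on U = (a,b), where p, q, r ∈ C^m(U), p has a zero of order l_p at x̂ ∈ U and q a zero of order l_q at x̂ with l := l_p − l_q ≥ 2 even (l_p, l_q < m), p and q have no other zeros in U, and r has a zero of order l_r ≥ l_q at x̂. The quotient p/q extends to a C^l function h near x̂ with a zero of order l at x̂. If h^{(l)}(x̂) > 0, then: (a) there exists a solution y ∈ C^{m−l_q}(U) of the ODE; (b) any two solutions in C^{m−l_q}(U) coincide on [x̂, b); (c) the restrictions to (a, x̂] of the C^{m−l_q}(U) solutions form a one-parameter family; and (d) every solution of the ODE on U∖{x̂} that does not extend to a continuous solution on U fails to be locally Lebesgue-integrable at x̂. If h^{(l)}(x̂) < 0, the same statements hold with the two sides of x̂ interchanged: solutions in C^{m−l_q}(U) are unique on (a, x̂] and form a one-parameter family on [x̂, b). -/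
/- Statement 19 (Proposition B(iv)-(v), even-order singular case): if l = l_p - l_q ≥ 2
is even, solutions y ∈ C^{m-l_q}(U) of p y' + q y = r exist; they are unique on one
side of x̂ (depending on the sign of h^{(l)}(x̂), h the extension of p/q) and form a
one-parameter family on the other side; any solution on U∖{x̂} not extending
continuously to U is not locally Lebesgue-integrable at x̂. -/

open Set MeasureTheory

namespace SingularODE19

/-- `g` has a zero of order `l` at `xh`. -/
def HasZeroOfOrder (g : ℝ → ℝ) (xh : ℝ) (l : ℕ) : Prop :=
  (∀ k < l, iteratedDeriv k g xh = 0) ∧ iteratedDeriv l g xh ≠ 0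

/-- A solution of `p y' + q y = r` on `(a,b)` of class `C^{m-l_q}`. -/
def IsSol (a b : ℝ) (ν : ℕ∞) (p q r y : ℝ → ℝ) : Prop :=
  ContDiffOn ℝ ν y (Ioo a b) ∧ ∀ x ∈ Ioo a b, p x * deriv y x + q x * y x = r x

/-!
Division by `q` brings the equation into the form `h y' + y = ρ`, where `h` is positive off `xh`
(after a reflection `x ↦ -x` if necessary) and `h = O((x - xh)²)`; both `h` and `ρ = r / q` are
of class `C^(m - lq)`, because a `C^(n + k)` function with a zero of order at least `k` is
`(x - xh)^k` times a `C^n` function (`exists_division`).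

The heart of the proof is an asymptotic analysis of `h w' + g w = σ` with `g xh > 0`. As soon as
`w` exceeds the value `σ(xh) / g(xh)` by `ε`, the equation forces `w' ≤ -κ / (x - xh)²`. Hence left
of `xh` every solution tends to `σ(xh) / g(xh)` (`left_tendsto`), while right of `xh` a solution
either has this limit or is at least `K / |x - xh|` in absolute value, so that it is not
integrable (`right_dichotomy`, `BlowsUp.not_integrableOn`). This gives the claim on
non-integrable solutions directly.

It also gives regularity: the derivative of a continuous solution `y` solves the differentiated
equation `h w' + (g + h') w = σ' - g' y`, which is of the same type since `h'(xh) = 0`, and it cannot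
blow up because `y` is continuous. So `y'` has a limit at `xh`, and induction (`regularity`)
shows that a continuous solution is as smooth as the coefficients. The Euler equation
`(x - xh) y' + κ y = σ`, from which `exists_division` follows, is treated by the same induction, with
l'Hôpital's rule providing the limit.

Solutions on both sides come from an integrating factor. On the left any of them will do; on the
right the integration constant is chosen so that the solution stays bounded. Gluing two one-sided
solutions at `xh` is unproblematic by regularity. Homogeneous solutions vanish on the right, since
there `v²` is nonincreasing and `v(xh) = 0`, and on the left they are the multiples of a single
positive solution.
-/

section Auxiliary

open Filter Topology

/-! ### One-sided asymptotics at the singular point -/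

lemma antitoneOn_Ioo_of_hasDerivAt {f f' : ℝ → ℝ} {c d : ℝ}
    (hf : ∀ x ∈ Ioo c d, HasDerivAt f (f' x) x) (hf' : ∀ x ∈ Ioo c d, f' x ≤ 0) :
    AntitoneOn f (Ioo c d) := by
  apply antitoneOn_of_deriv_nonpos (convex_Ioo c d)
  · exact fun x hx => (hf x hx).continuousAt.continuousWithinAt
  · rw [interior_Ioo]
    exact fun x hx => (hf x hx).differentiableAt.differentiableWithinAt
  · rw [interior_Ioo]
    intro x hx
    rw [(hf x hx).deriv]
    exact hf' x hx

/-- A barrier argument: if `v' < 0` wherever `v = ε`, then `v` stays below `ε` once it is there. -/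
lemma le_of_barrier {v v' : ℝ → ℝ} {s t ε : ℝ} (hst : s ≤ t)
    (hv : ∀ x ∈ Icc s t, HasDerivAt v (v' x) x) (hs : v s ≤ ε)
    (hb : ∀ x ∈ Icc s t, v x = ε → v' x < 0) : v t ≤ ε :=
  image_le_of_deriv_right_lt_deriv_boundary (f := v) (f' := v') (a := s) (b := t)
    (B := fun _ => ε) (B' := fun _ => 0)
    (fun x hx => (hv x hx).continuousAt.continuousWithinAt)
    (fun x hx => (hv x (Ico_subset_Icc_self hx)).hasDerivWithinAt) hs
    (fun x => hasDerivAt_const x ε) (fun x hx => hb x (Ico_subset_Icc_self hx))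
    (right_mem_Icc.2 hst)

/-- From `h v' + g v = τ` with `τ` small against `g ε` and `0 < h ≤ C s²`: wherever `v ≥ ε`,
the derivative satisfies `s² v' ≤ -κ`. -/
lemma deriv_bound {C g0 ε hx gx tx vx vx' s2 : ℝ} (hC : 0 < C) (hg0 : 0 < g0) (hε : 0 < ε)
    (h0 : 0 < hx) (h1 : hx ≤ C * s2) (hg : g0 / 2 < gx) (ht : tx < ε * g0 / 4)
    (heq : hx * vx' + gx * vx = tx) (hv : ε ≤ vx) :
    vx' < 0 ∧ s2 * vx' ≤ -(ε * g0 / (4 * C)) := by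
  have h2 : hx * vx' ≤ -(ε * g0 / 4) := by
    have : g0 / 2 * ε ≤ gx * vx := mul_le_mul hg.le hv hε.le (by linarith)
    nlinarith
  have hp : 0 < ε * g0 / 4 := by positivity
  have h3 : vx' < 0 := by
    by_contra hcon
    have := mul_nonneg h0.le (not_lt.1 hcon)
    linarith
  refine ⟨h3, ?_⟩
  have h4 : C * s2 * vx' ≤ hx * vx' := mul_le_mul_of_nonpos_right h1 h3.le
  have h5 : ε * g0 / (4 * C) = (ε * g0 / 4) / C := by field_simp
  rw [h5, ← neg_div, le_div_iff₀ hC]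
  linarith

/-- Right of the singular point, a solution that does not stay below `ε` blows up like
`K / (x - xh)`, since it is decreasing in `x` at a rate at least `κ / (x - xh)²`. -/
lemma right_le_or_blowup {xh C g0 ε : ℝ} {h g τ v v' : ℝ → ℝ}
    (hC : 0 < C) (hg0 : 0 < g0) (hε : 0 < ε)
    (hev : ∀ᶠ x in 𝓝[>] xh, 0 < h x ∧ h x ≤ C * (x - xh) ^ 2 ∧ HasDerivAt v (v' x) x ∧
      h x * v' x + g x * v x = τ x)
    (hg : Tendsto g (𝓝[>] xh) (𝓝 g0)) (hτ : Tendsto τ (𝓝[>] xh) (𝓝 0)) :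
    (∀ᶠ x in 𝓝[>] xh, v x ≤ ε) ∨ ∃ K > 0, ∀ᶠ x in 𝓝[>] xh, K / (x - xh) ≤ v x := by
  have h1 := hg.eventually_const_lt (show g0 / 2 < g0 by linarith)
  have h2 := hτ.eventually_lt_const (show 0 < ε * g0 / 4 by positivity)
  obtain ⟨u, hu, hsub⟩ := mem_nhdsGT_iff_exists_Ioo_subset.1 (hev.and (h1.and h2))
  have hu : xh < u := hu
  have hd : ∀ x ∈ Ioo xh u, ε ≤ v x →
      v' x < 0 ∧ (x - xh) ^ 2 * v' x ≤ -(ε * g0 / (4 * C)) := by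
    intro x hx hvx
    obtain ⟨⟨a1, a2, a3, a4⟩, a5, a6⟩ := hsub hx
    exact deriv_bound hC hg0 hε a1 a2 a5 a6 a4 hvx
  by_cases hex : ∃ x1 ∈ Ioo xh u, ε < v x1
  · right
    obtain ⟨x1, hx1, hvx1⟩ := hex
    have hge : ∀ x ∈ Ioc xh x1, ε ≤ v x := by
      intro x hx
      by_contra hcon
      have hsub' : ∀ z ∈ Icc x x1, z ∈ Ioo xh u := fun z hz =>
        ⟨hx.1.trans_le hz.1, hz.2.trans_lt hx1.2⟩
      have := le_of_barrier hx.2 (fun z hz => (hsub (hsub' z hz)).1.2.2.1)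
        (not_le.1 hcon).le (fun z hz hzv => (hd z (hsub' z hz) hzv.ge).1)
      linarith
    set κ := ε * g0 / (4 * C) with hκ
    have hκ0 : 0 < κ := by positivity
    have hmono : AntitoneOn (fun x => v x - κ / (x - xh)) (Ioo xh x1) := by
      apply antitoneOn_Ioo_of_hasDerivAt (f' := fun x => v' x - (-κ / (x - xh) ^ 2))
      · intro x hx
        have hne : x - xh ≠ 0 := (sub_pos.2 hx.1).ne'
        have e1 := (hsub ⟨hx.1, hx.2.trans hx1.2⟩).1.2.2.1
        have e2 : HasDerivAt (fun x => κ / (x - xh)) (-κ / (x - xh) ^ 2) x := by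
          have := (hasDerivAt_const x κ).div ((hasDerivAt_id x).sub_const xh) hne
          simp only [id, zero_mul, mul_one, zero_sub] at this
          exact this
        exact e1.sub e2
      · intro x hx
        have hp : 0 < (x - xh) ^ 2 := pow_pos (sub_pos.2 hx.1) 2
        have := (hd x ⟨hx.1, hx.2.trans hx1.2⟩ (hge x ⟨hx.1, hx.2.le⟩)).2
        have : v' x ≤ -κ / (x - xh) ^ 2 := by
          rw [le_div_iff₀ hp]; linarith
        linarith
    obtain ⟨x2, hx2⟩ := exists_between hx1.1
    refine ⟨κ / 2, by positivity, ?_⟩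
    -- at distance at most `(x2 - xh) / 2` the constant `κ / (x2 - xh)` is absorbed
    have hmid : xh < xh + (x2 - xh) / 2 := by linarith [hx2.1]
    filter_upwards [Ioo_mem_nhdsGT hmid] with x hx
    have hxx2 : x ≤ x2 := by linarith [hx.2, hx2.1]
    have hpos : 0 < x - xh := sub_pos.2 hx.1
    have hm := hmono ⟨hx.1, hxx2.trans_lt hx2.2⟩ hx2 hxx2
    have hge2 := hge x2 ⟨hx2.1, hx2.2.le⟩
    simp only at hm
    have hle : κ / (x2 - xh) ≤ κ / 2 / (x - xh) := by
      rw [div_div κ 2]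
      apply div_le_div_of_nonneg_left hκ0.le (by positivity)
      linarith [hx.2]
    have hsplit : κ / (x - xh) = κ / 2 / (x - xh) + κ / 2 / (x - xh) := by ring
    linarith
  · left
    push Not at hex
    filter_upwards [Ioo_mem_nhdsGT hu] with x hx using hex x hx

/-- Left of the singular point every solution eventually drops below any `ε > 0`. -/
lemma left_le {xh C g0 ε : ℝ} {h g τ v v' : ℝ → ℝ}
    (hC : 0 < C) (hg0 : 0 < g0) (hε : 0 < ε)
    (hev : ∀ᶠ x in 𝓝[<] xh, 0 < h x ∧ h x ≤ C * (x - xh) ^ 2 ∧ HasDerivAt v (v' x) x ∧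
      h x * v' x + g x * v x = τ x)
    (hg : Tendsto g (𝓝[<] xh) (𝓝 g0)) (hτ : Tendsto τ (𝓝[<] xh) (𝓝 0)) :
    ∀ᶠ x in 𝓝[<] xh, v x ≤ ε := by
  have h1 := hg.eventually_const_lt (show g0 / 2 < g0 by linarith)
  have h2 := hτ.eventually_lt_const (show 0 < ε * g0 / 4 by positivity)
  obtain ⟨u, hu, hsub⟩ := mem_nhdsLT_iff_exists_Ioo_subset.1 (hev.and (h1.and h2))
  have hu : u < xh := hu
  have hd : ∀ x ∈ Ioo u xh, ε ≤ v x →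
      v' x < 0 ∧ (x - xh) ^ 2 * v' x ≤ -(ε * g0 / (4 * C)) := by
    intro x hx hvx
    obtain ⟨⟨a1, a2, a3, a4⟩, a5, a6⟩ := hsub hx
    exact deriv_bound hC hg0 hε a1 a2 a5 a6 a4 hvx
  obtain ⟨x1, hx1, hvx1⟩ : ∃ x1 ∈ Ioo u xh, v x1 ≤ ε := by
    by_contra! hcon
    set κ := ε * g0 / (4 * C) with hκ
    have hκ0 : 0 < κ := by positivity
    have hmono : AntitoneOn (fun x => v x - κ / (x - xh)) (Ioo u xh) := by
      apply antitoneOn_Ioo_of_hasDerivAt (f' := fun x => v' x - (-κ / (x - xh) ^ 2))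
      · intro x hx
        have hne : x - xh ≠ 0 := (sub_neg.2 hx.2).ne
        have e1 := (hsub hx).1.2.2.1
        have e2 : HasDerivAt (fun x => κ / (x - xh)) (-κ / (x - xh) ^ 2) x := by
          have := (hasDerivAt_const x κ).div ((hasDerivAt_id x).sub_const xh) hne
          simp only [id, zero_mul, mul_one, zero_sub] at this
          exact this
        exact e1.sub e2
      · intro x hx
        have hp : 0 < (x - xh) ^ 2 := by
          have : x - xh ≠ 0 := (sub_neg.2 hx.2).ne
          positivity
        have := (hd x hx (hcon x hx).le).2
        have : v' x ≤ -κ / (x - xh) ^ 2 := by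
          rw [le_div_iff₀ hp]; linarith
        linarith
    obtain ⟨x2, hx2⟩ := exists_between hu
    set M := v x2 - κ / (x2 - xh) with hM
    have hMpos : 0 < M := by
      have : κ / (x2 - xh) < 0 := div_neg_of_pos_of_neg hκ0 (sub_neg.2 hx2.2)
      linarith [hcon x2 hx2]
    -- a point so close to `xh` that the barrier `M + κ / (x - xh)` is nonpositive
    obtain ⟨x, hxa, hxb⟩ := exists_between (max_lt hx2.2 (show xh - κ / M < xh by
      have : 0 < κ / M := by positivity
      linarith))
    have hx2x : x2 < x := (le_max_left _ _).trans_lt hxa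
    have hxκ : xh - κ / M < x := (le_max_right _ _).trans_lt hxa
    have hxu : x ∈ Ioo u xh := ⟨hx2.1.trans hx2x, hxb⟩
    have hm := hmono hx2 hxu hx2x.le
    simp only at hm
    have hpos : 0 < xh - x := by linarith
    have h7 : M ≤ κ / (xh - x) := by
      rw [le_div_iff₀ hpos]
      have : xh - x < κ / M := by linarith
      rw [lt_div_iff₀ hMpos] at this
      linarith
    have h8 : κ / (x - xh) = -(κ / (xh - x)) := by rw [← neg_sub xh x, div_neg]
    have := hcon x hxu
    linarith
  filter_upwards [Ioo_mem_nhdsLT hx1.2] with x hx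
  have hsub' : ∀ z ∈ Icc x1 x, z ∈ Ioo u xh := fun z hz =>
    ⟨hx1.1.trans_le hz.1, hz.2.trans_lt hx.2⟩
  exact le_of_barrier hx.1.le (fun z hz => (hsub (hsub' z hz)).1.2.2.1)
    hvx1 (fun z hz hzv => (hd z (hsub' z hz) hzv.ge).1)

lemma tendsto_of_forall_eventually_le {F : Filter ℝ} {w : ℝ → ℝ} {L : ℝ}
    (h1 : ∀ ε > 0, ∀ᶠ x in F, w x - L ≤ ε) (h2 : ∀ ε > 0, ∀ᶠ x in F, -(w x - L) ≤ ε) :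
    Tendsto w F (𝓝 L) := by
  rw [Metric.tendsto_nhds]
  intro ε hε
  filter_upwards [h1 (ε / 2) (by linarith), h2 (ε / 2) (by linarith)] with x a1 a2
  rw [Real.dist_eq, abs_lt]
  constructor <;> linarith

/-- Just right of `xh`, `w` has constant sign and `|w x| ≥ K / (x - xh)` for some `K > 0`. -/
def BlowsUp (xh : ℝ) (w : ℝ → ℝ) : Prop :=
  ∃ K > 0, (∀ᶠ x in 𝓝[>] xh, K / (x - xh) ≤ w x) ∨ (∀ᶠ x in 𝓝[>] xh, K / (x - xh) ≤ -w x)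

/-- Adding a constant costs at most half of the blow-up constant. -/
lemma blowup_add_const {xh K L : ℝ} {v : ℝ → ℝ} (hK : 0 < K)
    (hv : ∀ᶠ x in 𝓝[>] xh, K / (x - xh) ≤ v x) :
    ∀ᶠ x in 𝓝[>] xh, K / 2 / (x - xh) ≤ v x + L := by
  have hlt : xh < xh + K / 2 / (|L| + 1) := by
    have : 0 < K / 2 / (|L| + 1) := by positivity
    linarith
  filter_upwards [hv, Ioo_mem_nhdsGT hlt] with x hx hxI
  have hpos : 0 < x - xh := sub_pos.2 hxI.1
  have h1 : |L| ≤ K / 2 / (x - xh) := by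
    rw [le_div_iff₀ hpos]
    have : x - xh < K / 2 / (|L| + 1) := by linarith [hxI.2]
    rw [lt_div_iff₀ (by positivity)] at this
    nlinarith
  have hsplit : K / (x - xh) = K / 2 / (x - xh) + K / 2 / (x - xh) := by ring
  linarith [neg_abs_le L]

/-- On the right a solution of `h w' + g w = σ` either has the limit `σ₀ / g₀` or blows up. -/
lemma right_dichotomy {xh C g0 σ0 : ℝ} {h g σ w w' : ℝ → ℝ} (hC : 0 < C) (hg0 : 0 < g0)
    (hev : ∀ᶠ x in 𝓝[>] xh, 0 < h x ∧ h x ≤ C * (x - xh) ^ 2 ∧ HasDerivAt w (w' x) x ∧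
      h x * w' x + g x * w x = σ x)
    (hg : Tendsto g (𝓝[>] xh) (𝓝 g0)) (hσ : Tendsto σ (𝓝[>] xh) (𝓝 σ0)) :
    Tendsto w (𝓝[>] xh) (𝓝 (σ0 / g0)) ∨ BlowsUp xh w := by
  by_cases hB : BlowsUp xh w
  · exact Or.inr hB
  left
  set L := σ0 / g0 with hL
  have hLg : σ0 - g0 * L = 0 := by rw [hL]; field_simp; simp
  have hτ : Tendsto (fun x => σ x - g x * L) (𝓝[>] xh) (𝓝 0) := by
    rw [← hLg]; exact hσ.sub (hg.mul_const L)
  have hτ' : Tendsto (fun x => -(σ x - g x * L)) (𝓝[>] xh) (𝓝 0) := by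
    simpa using hτ.neg
  apply tendsto_of_forall_eventually_le
  · intro ε hε
    rcases right_le_or_blowup (v := fun x => w x - L) (v' := w') hC hg0 hε
      (hev.mono fun x hx => ⟨hx.1, hx.2.1, hx.2.2.1.sub_const L, by linarith [hx.2.2.2]⟩)
      hg hτ with h1 | ⟨K, hK, h1⟩
    · exact h1
    · refine absurd ⟨K / 2, by positivity, Or.inl ?_⟩ hB
      have := blowup_add_const (L := L) hK h1
      simpa using this
  · intro ε hε
    rcases right_le_or_blowup (v := fun x => -(w x - L)) (v' := fun x => -w' x) hC hg0 hε
      (hev.mono fun x hx => ⟨hx.1, hx.2.1, (hx.2.2.1.sub_const L).neg, by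
        linarith [hx.2.2.2]⟩)
      hg hτ' with h1 | ⟨K, hK, h1⟩
    · exact h1
    · refine absurd ⟨K / 2, by positivity, Or.inr ?_⟩ hB
      have := blowup_add_const (L := -L) hK h1
      refine this.mono fun x hx => hx.trans (le_of_eq ?_)
      ring

/-- On the left every solution of `h w' + g w = σ` has the limit `σ₀ / g₀`. -/
lemma left_tendsto {xh C g0 σ0 : ℝ} {h g σ w w' : ℝ → ℝ} (hC : 0 < C) (hg0 : 0 < g0)
    (hev : ∀ᶠ x in 𝓝[<] xh, 0 < h x ∧ h x ≤ C * (x - xh) ^ 2 ∧ HasDerivAt w (w' x) x ∧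
      h x * w' x + g x * w x = σ x)
    (hg : Tendsto g (𝓝[<] xh) (𝓝 g0)) (hσ : Tendsto σ (𝓝[<] xh) (𝓝 σ0)) :
    Tendsto w (𝓝[<] xh) (𝓝 (σ0 / g0)) := by
  set L := σ0 / g0 with hL
  have hLg : σ0 - g0 * L = 0 := by rw [hL]; field_simp; simp
  have hτ : Tendsto (fun x => σ x - g x * L) (𝓝[<] xh) (𝓝 0) := by
    rw [← hLg]; exact hσ.sub (hg.mul_const L)
  have hτ' : Tendsto (fun x => -(σ x - g x * L)) (𝓝[<] xh) (𝓝 0) := by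
    simpa using hτ.neg
  apply tendsto_of_forall_eventually_le
  · intro ε hε
    exact left_le (v := fun x => w x - L) (v' := w') hC hg0 hε
      (hev.mono fun x hx => ⟨hx.1, hx.2.1, hx.2.2.1.sub_const L, by linarith [hx.2.2.2]⟩) hg hτ
  · intro ε hε
    exact left_le (v := fun x => -(w x - L)) (v' := fun x => -w' x) hC hg0 hε
      (hev.mono fun x hx => ⟨hx.1, hx.2.1, (hx.2.2.1.sub_const L).neg, by
        linarith [hx.2.2.2]⟩) hg hτ'

lemma BlowsUp.not_integrableOn {xh ε : ℝ} {w : ℝ → ℝ} (hw : BlowsUp xh w) (hε : xh < ε) :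
    ¬ IntegrableOn w (Ioo xh ε) volume := by
  obtain ⟨K, hK, hB⟩ := hw
  have hO : ∀ᶠ x in 𝓝[>] xh, K / (x - xh) ≤ |w x| := by
    rcases hB with hB | hB
    · exact hB.mono fun x hx => hx.trans (le_abs_self _)
    · exact hB.mono fun x hx => hx.trans (neg_le_abs _)
  intro hInt
  obtain ⟨u, hu, hsub⟩ := mem_nhdsGT_iff_exists_Ioo_subset.1 hO
  have hm : xh < min u ε := lt_min hu hε
  have h1 : IntegrableOn w (Ioo xh (min u ε)) volume :=
    hInt.mono_set (Ioo_subset_Ioo_right (min_le_right _ _))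
  have h2 : IntegrableOn (fun x => (x - xh)⁻¹) (Ioo xh (min u ε)) volume := by
    refine Integrable.mono' (h1.norm.const_mul K⁻¹) (by fun_prop) ?_
    refine (ae_restrict_iff' measurableSet_Ioo).2 (Eventually.of_forall fun x hx => ?_)
    have hpos : 0 < x - xh := sub_pos.2 hx.1
    have hlow : K / (x - xh) ≤ |w x| := hsub ⟨hx.1, hx.2.trans_le (min_le_left _ _)⟩
    rw [Real.norm_eq_abs, abs_of_pos (by positivity), Real.norm_eq_abs]
    calc (x - xh)⁻¹ = K⁻¹ * (K / (x - xh)) := by field_simp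
      _ ≤ K⁻¹ * |w x| := by gcongr
  rw [← intervalIntegrable_iff_integrableOn_Ioo_of_le hm.le, intervalIntegrable_sub_inv_iff] at h2
  rcases h2 with h2 | h2
  · exact hm.ne h2
  · exact h2 left_mem_uIcc

/-- The derivative of a function continuous at `xh` cannot blow up there: having a constant sign,
it would be integrable. -/
lemma BlowsUp.not_deriv {xh : ℝ} {y : ℝ → ℝ} (hw : BlowsUp xh (deriv y))
    (hd : ∀ᶠ x in 𝓝[>] xh, DifferentiableAt ℝ y x) (hc : ContinuousAt y xh) : False := by
  have key : ∀ y : ℝ → ℝ, ∀ K > 0, (∀ᶠ x in 𝓝[>] xh, DifferentiableAt ℝ y x) →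
      ContinuousAt y xh → (∀ᶠ x in 𝓝[>] xh, K / (x - xh) ≤ deriv y x) → False := by
    intro y K hK hd hc hB
    obtain ⟨u, hu, hsub⟩ := mem_nhdsGT_iff_exists_Ioo_subset.1 (hd.and hB)
    obtain ⟨u', hu'⟩ := exists_between (show xh < u from hu)
    have hInt := intervalIntegral.integrableOn_deriv_of_nonneg (g := y) (g' := deriv y)
      (a := xh) (b := u') (fun x hx => by
        rcases eq_or_lt_of_le hx.1 with h | h
        · rw [← h]; exact hc.continuousWithinAt
        · exact (hsub ⟨h, hx.2.trans_lt hu'.2⟩).1.continuousAt.continuousWithinAt)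
      (fun x hx => (hsub ⟨hx.1, hx.2.trans hu'.2⟩).1.hasDerivAt)
      (fun x hx => le_trans (by have := hx.1; have : 0 < x - xh := by linarith
                                positivity) (hsub ⟨hx.1, hx.2.trans hu'.2⟩).2)
    exact BlowsUp.not_integrableOn ⟨K, hK, Or.inl hB⟩ hu'.1 (hInt.mono_set Ioo_subset_Ioc_self)
  obtain ⟨K, hK, hB | hB⟩ := hw
  · exact key y K hK hd hc hB
  · refine key (fun x => -y x) K hK (hd.mono fun x hx => hx.neg) hc.neg (hB.mono fun x hx => ?_)
    rw [deriv.fun_neg]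
    exact hx

lemma BlowsUp.not_tendsto {xh L : ℝ} {w : ℝ → ℝ} (hw : BlowsUp xh w) :
    ¬ Tendsto w (𝓝[>] xh) (𝓝 L) := by
  intro ht
  have hb : Tendsto (fun x => |w x|) (𝓝[>] xh) (𝓝 |L|) := ht.abs
  obtain ⟨K, hK, hB⟩ := hw
  have hO : ∀ᶠ x in 𝓝[>] xh, K / (x - xh) ≤ |w x| := by
    rcases hB with hB | hB
    · exact hB.mono fun x hx => hx.trans (le_abs_self _)
    · exact hB.mono fun x hx => hx.trans (neg_le_abs _)
  have h1 := blowup_add_const (L := -(|L| + 1)) hK hO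
  have h2 := hb.eventually_lt_const (show |L| < |L| + 1 by linarith)
  obtain ⟨x, hx1, hx2, hx3⟩ := (h1.and (h2.and self_mem_nhdsWithin)).exists
  have hpos : 0 < x - xh := sub_pos.2 hx3
  have : 0 < K / 2 / (x - xh) := by positivity
  linarith

/-! ### Regularity and division by powers of `x - xh` -/

/-- `y` solves `h y' + g y = σ` on `(a,b) ∖ {xh}`. -/
def OffSol (a b xh : ℝ) (h g σ y : ℝ → ℝ) : Prop :=
  ∀ x ∈ Ioo a b, x ≠ xh → DifferentiableAt ℝ y x ∧ h x * deriv y x + g x * y x = σ x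

lemma eventually_ne_Ioo {a b xh : ℝ} (hx : xh ∈ Ioo a b) :
    ∀ᶠ x in 𝓝[≠] xh, x ∈ Ioo a b ∧ x ≠ xh :=
  inter_mem (mem_nhdsWithin_of_mem_nhds (Ioo_mem_nhds hx.1 hx.2)) self_mem_nhdsWithin

lemma ContDiffOn.differentiableAt_Ioo {a b x : ℝ} {f : ℝ → ℝ}
    (hf : ContDiffOn ℝ 1 f (Ioo a b)) (hx : x ∈ Ioo a b) : DifferentiableAt ℝ f x :=
  (hf.differentiableOn one_ne_zero).differentiableAt (Ioo_mem_nhds hx.1 hx.2)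

/-- Off the singular point `y'` solves the differentiated equation. -/
lemma OffSol.differentiate {a b xh : ℝ} {h g σ y : ℝ → ℝ}
    (hne : ∀ x ∈ Ioo a b, x ≠ xh → h x ≠ 0)
    (hh : ContDiffOn ℝ 1 h (Ioo a b)) (hg : ContDiffOn ℝ 1 g (Ioo a b))
    (hσ : ContDiffOn ℝ 1 σ (Ioo a b)) (hy : OffSol a b xh h g σ y) :
    OffSol a b xh h (fun x => g x + deriv h x) (fun x => deriv σ x - deriv g x * y x)
      (deriv y) := by
  intro x hx hxne
  have dh := ContDiffOn.differentiableAt_Ioo hh hx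
  have dg := ContDiffOn.differentiableAt_Ioo hg hx
  have dσ := ContDiffOn.differentiableAt_Ioo hσ hx
  have hU : ∀ᶠ z in 𝓝 x, z ∈ Ioo a b ∧ z ≠ xh :=
    inter_mem (Ioo_mem_nhds hx.1 hx.2) (isOpen_ne.mem_nhds hxne)
  have dy := (hy x hx hxne).1
  have e1 : deriv y =ᶠ[𝓝 x] fun z => (σ z - g z * y z) / h z := by
    filter_upwards [hU] with z hz
    rw [eq_div_iff (hne z hz.1 hz.2)]
    linarith [(hy z hz.1 hz.2).2]
  have ddy : DifferentiableAt ℝ (deriv y) x :=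
    e1.differentiableAt_iff.2 ((dσ.fun_sub (dg.fun_mul dy)).fun_div dh (hne x hx hxne))
  refine ⟨ddy, ?_⟩
  have e2 : (fun z => h z * deriv y z + g z * y z) =ᶠ[𝓝 x] σ := by
    filter_upwards [hU] with z hz using (hy z hz.1 hz.2).2
  have e3 := e2.deriv_eq
  rw [deriv_fun_add (dh.fun_mul ddy) (dg.fun_mul dy), deriv_fun_mul dh ddy,
    deriv_fun_mul dg dy] at e3
  linarith

/-- Bootstrapping: if for the coefficient class `S` (stable under `g ↦ g + h'`) the derivative
of a continuous solution always has a limit at `xh`, then continuous solutions are as smooth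
as the coefficients. -/
lemma regularity {a b xh : ℝ} (hx : xh ∈ Ioo a b) {h : ℝ → ℝ}
    (hne : ∀ x ∈ Ioo a b, x ≠ xh → h x ≠ 0)
    (S : (ℝ → ℝ) → Prop) (hS : ∀ g, S g → S (fun x => g x + deriv h x))
    (key : ∀ g σ y, S g → ContDiffOn ℝ 1 h (Ioo a b) → ContDiffOn ℝ 1 g (Ioo a b) →
      ContDiffOn ℝ 1 σ (Ioo a b) →
      ContinuousOn y (Ioo a b) → OffSol a b xh h g σ y →
      ∃ L, Tendsto (deriv y) (𝓝[≠] xh) (𝓝 L)) :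
    ∀ j : ℕ, ContDiffOn ℝ j h (Ioo a b) → ∀ g σ y, S g → ContDiffOn ℝ j g (Ioo a b) →
      ContDiffOn ℝ j σ (Ioo a b) → ContinuousOn y (Ioo a b) → OffSol a b xh h g σ y →
      ContDiffOn ℝ j y (Ioo a b) := by
  intro j
  induction j with
  | zero =>
    intro _ g σ y _ _ _ hy _
    simpa using hy
  | succ j ih =>
    intro hh g σ y hSg hg hσ hyc hy
    have le1 : (1 : WithTop ℕ∞) ≤ ((j + 1 : ℕ) : WithTop ℕ∞) := by
      push_cast; exact le_add_self
    have lej : ((j : ℕ) : WithTop ℕ∞) ≤ ((j + 1 : ℕ) : WithTop ℕ∞) := by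
      push_cast; exact le_self_add
    have hyj := ih (hh.of_le lej) g σ y hSg (hg.of_le lej) (hσ.of_le lej) hyc hy
    have hh1 := hh.of_le le1
    have hg1 := hg.of_le le1
    have hσ1 := hσ.of_le le1
    obtain ⟨L, hL⟩ := key g σ y hSg hh1 hg1 hσ1 hyc hy
    have hyx : ContinuousAt y xh := hyc.continuousAt (Ioo_mem_nhds hx.1 hx.2)
    have hd : HasDerivAt y L xh := by
      have hr : HasDerivWithinAt y L (Ici xh) xh :=
        hasDerivWithinAt_Ici_of_tendsto_deriv (s := Ioo xh b)
          (fun x hxI => (hy x ⟨hx.1.trans hxI.1, hxI.2⟩ hxI.1.ne').1.differentiableWithinAt)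
          hyx.continuousWithinAt (Ioo_mem_nhdsGT hx.2)
          (hL.mono_left (nhdsWithin_mono _ fun x hxI => ne_of_gt hxI))
      have hl : HasDerivWithinAt y L (Iic xh) xh :=
        hasDerivWithinAt_Iic_of_tendsto_deriv (s := Ioo a xh)
          (fun x hxI => (hy x ⟨hxI.1, hxI.2.trans hx.2⟩ hxI.2.ne).1.differentiableWithinAt)
          hyx.continuousWithinAt (Ioo_mem_nhdsLT hx.1)
          (hL.mono_left (nhdsWithin_mono _ fun x hxI => ne_of_lt hxI))
      simpa using hl.union hr
    have hdiff : ∀ x ∈ Ioo a b, DifferentiableAt ℝ y x := by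
      intro x hxI
      by_cases hxx : x = xh
      · rw [hxx]; exact hd.differentiableAt
      · exact (hy x hxI hxx).1
    have hwoff := OffSol.differentiate hne hh1 hg1 hσ1 hy
    have hwc : ContinuousOn (deriv y) (Ioo a b) := by
      intro x hxI
      apply ContinuousAt.continuousWithinAt
      by_cases hxx : x = xh
      · rw [hxx, continuousAt_iff_punctured_nhds, hd.deriv]
        exact hL
      · exact (hwoff x hxI hxx).1.continuousAt
    have hder : ∀ {f : ℝ → ℝ}, ContDiffOn ℝ (j + 1 : ℕ) f (Ioo a b) →
        ContDiffOn ℝ j (deriv f) (Ioo a b) := by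
      intro f hf
      push_cast at hf
      exact ((contDiffOn_succ_iff_deriv_of_isOpen isOpen_Ioo).1 hf).2.2
    have hw := ih (hh.of_le lej) _ _ _ (hS g hSg) ((hg.of_le lej).add (hder hh))
      ((hder hσ).sub ((hder hg).mul hyj)) hwc hwoff
    push_cast
    rw [contDiffOn_succ_iff_deriv_of_isOpen isOpen_Ioo]
    exact ⟨fun x hxI => (hdiff x hxI).differentiableWithinAt, by simp, hw⟩

lemma contDiffOn_of_nat {n : ℕ∞} {f : ℝ → ℝ} {s : Set ℝ}
    (H : ∀ j : ℕ, (j : ℕ∞) ≤ n → ContDiffOn ℝ j f s) : ContDiffOn ℝ n f s :=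
  contDiffOn_iff_forall_nat_le.2 H

/-- Regularity for the Euler-type equation `(x - xh) y' + κ y = σ`, `κ ≥ 1`. -/
lemma euler_regularity {a b xh : ℝ} (hx : xh ∈ Ioo a b) {n : ℕ∞} {κ : ℕ} (hκ : 1 ≤ κ)
    {σ y : ℝ → ℝ} (hσ : ContDiffOn ℝ n σ (Ioo a b)) (hyc : ContinuousOn y (Ioo a b))
    (hy : OffSol a b xh (fun x => x - xh) (fun _ => κ) σ y) :
    ContDiffOn ℝ n y (Ioo a b) := by
  apply contDiffOn_of_nat
  intro j hj
  refine regularity hx (h := fun x => x - xh) (fun x _ hne => sub_ne_zero.2 hne)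
    (fun g => ∃ κ : ℕ, 1 ≤ κ ∧ g = fun _ => (κ : ℝ)) ?_ ?_ j ?_ (fun _ => κ) σ y
    ⟨κ, hκ, rfl⟩ contDiffOn_const (hσ.of_le (by exact_mod_cast hj)) hyc hy
  · rintro g ⟨κ, hκ, rfl⟩
    refine ⟨κ + 1, by omega, ?_⟩
    funext x
    simp
  · rintro g σ y ⟨κ, hκ, rfl⟩ - - hσ hyc hy
    -- l'Hôpital for `y' = (x - xh)^κ (σ - κ y) / (x - xh)^(κ+1)`
    have hnhds := Ioo_mem_nhds hx.1 hx.2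
    have hσ' : ContinuousAt (deriv σ) xh := by
      have : ContDiffOn ℝ 0 (deriv σ) (Ioo a b) :=
        ((contDiffOn_succ_iff_deriv_of_isOpen isOpen_Ioo).1 (by simpa using hσ)).2.2
      exact this.continuousOn.continuousAt hnhds
    have lim0 : Tendsto (fun x => x - xh) (𝓝[≠] xh) (𝓝 0) := by
      have : ContinuousAt (fun x : ℝ => x - xh) xh := by fun_prop
      simpa using this.tendsto.mono_left nhdsWithin_le_nhds
    have hev := eventually_ne_Ioo hx
    have H := HasDerivAt.lhopital_zero_nhdsNE (a := xh) (l := 𝓝 (deriv σ xh / (κ + 1)))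
      (f := fun x => (x - xh) ^ κ * (σ x - κ * y x)) (f' := fun x => (x - xh) ^ κ * deriv σ x)
      (g := fun x => (x - xh) ^ (κ + 1)) (g' := fun x => (κ + 1) * (x - xh) ^ κ)
      (by
        filter_upwards [hev] with x hxx
        have dσ := (ContDiffOn.differentiableAt_Ioo hσ hxx.1).hasDerivAt
        obtain ⟨dy, heq⟩ := hy x hxx.1 hxx.2
        have := (((hasDerivAt_id x).sub_const xh).fun_pow κ).fun_mul
          (dσ.fun_sub (dy.hasDerivAt.const_mul (κ : ℝ)))
        refine this.congr_deriv ?_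
        obtain ⟨k, rfl⟩ : ∃ k, κ = k + 1 := ⟨κ - 1, by omega⟩
        simp only [id, mul_one, Nat.add_sub_cancel]
        rw [← heq]
        ring)
      (by
        filter_upwards with x
        have := ((hasDerivAt_id x).sub_const xh).fun_pow (κ + 1)
        refine this.congr_deriv ?_
        simp)
      (by
        filter_upwards [hev] with x hxx
        have := pow_ne_zero κ (sub_ne_zero.2 hxx.2)
        positivity)
      (by
        have h1 : Tendsto (fun x => σ x - κ * y x) (𝓝[≠] xh) (𝓝 (σ xh - κ * y xh)) := by
          have : ContinuousAt (fun x => σ x - κ * y x) xh :=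
            (hσ.continuousOn.continuousAt hnhds).sub
              (continuousAt_const.mul (hyc.continuousAt hnhds))
          exact this.tendsto.mono_left nhdsWithin_le_nhds
        have := (lim0.pow κ).mul h1
        simpa [zero_pow (by omega : κ ≠ 0)] using this)
      (by simpa using lim0.pow (κ + 1))
      (by
        have h1 : Tendsto (fun x => deriv σ x / (κ + 1)) (𝓝[≠] xh) (𝓝 (deriv σ xh / (κ + 1))) :=
          (hσ'.tendsto.mono_left nhdsWithin_le_nhds).div_const _
        refine h1.congr' ?_
        filter_upwards [hev] with x hxx
        have := pow_ne_zero κ (sub_ne_zero.2 hxx.2)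
        field_simp)
    refine ⟨_, H.congr' ?_⟩
    filter_upwards [hev] with x hxx
    have h0 := sub_ne_zero.2 hxx.2
    rw [← (hy x hxx.1 hxx.2).2]
    field_simp
    ring
  · fun_prop

/-- Division: a `C^(k+n)` function whose derivatives of order `< k` vanish at `xh` is
`(x - xh)^k` times a `C^n` function. The quotient `F` for `f` and the quotient `G` for `f'`
are related by `(x - xh) F' + (k + 1) F = G`. -/
lemma exists_division {a b xh : ℝ} (hx : xh ∈ Ioo a b) {n : ℕ∞} (k : ℕ) :
    ∀ f : ℝ → ℝ, ContDiffOn ℝ ((n + k : ℕ∞) : WithTop ℕ∞) f (Ioo a b) →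
      (∀ i < k, iteratedDeriv i f xh = 0) →
      ∃ F : ℝ → ℝ, ContDiffOn ℝ n F (Ioo a b) ∧ (∀ x ∈ Ioo a b, f x = (x - xh) ^ k * F x) ∧
        k.factorial * F xh = iteratedDeriv k f xh := by
  induction k with
  | zero =>
    intro f hf _
    exact ⟨f, by simpa using hf, by simp, by simp⟩
  | succ k ih =>
    intro f hf hz
    have hf' : ContDiffOn ℝ (((n + k : ℕ∞) : WithTop ℕ∞) + 1) f (Ioo a b) := by
      convert hf using 1
      push_cast
      ring
    obtain ⟨hfd, -, hfd'⟩ := (contDiffOn_succ_iff_deriv_of_isOpen isOpen_Ioo).1 hf'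
    have hfd : ∀ x ∈ Ioo a b, HasDerivAt f (deriv f x) x := fun x hxI =>
      (hfd.differentiableAt (Ioo_mem_nhds hxI.1 hxI.2)).hasDerivAt
    obtain ⟨G, hG, hGe, hGv⟩ := ih (deriv f) hfd' (fun i hi => by
      rw [← iteratedDeriv_succ']; exact hz (i + 1) (by omega))
    have hnhds := Ioo_mem_nhds hx.1 hx.2
    have hGc : ContinuousAt G xh := hG.continuousOn.continuousAt hnhds
    have hev := eventually_ne_Ioo hx
    have hf0 : f xh = 0 := by simpa using hz 0 (by omega)
    set F : ℝ → ℝ := Function.update (fun x => f x / (x - xh) ^ (k + 1)) xh (G xh / (k + 1))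
      with hF
    have hFoff : ∀ x, x ≠ xh → F x = f x / (x - xh) ^ (k + 1) := fun x hxx => by
      rw [hF, Function.update_of_ne hxx]
    have hFx : F xh = G xh / (k + 1) := by rw [hF, Function.update_self]
    have lim0 : Tendsto (fun x => x - xh) (𝓝[≠] xh) (𝓝 0) := by
      have : ContinuousAt (fun x : ℝ => x - xh) xh := by fun_prop
      simpa using this.tendsto.mono_left nhdsWithin_le_nhds
    have hFder : ∀ x ∈ Ioo a b, x ≠ xh → HasDerivAt F
        ((deriv f x * (x - xh) ^ (k + 1) - f x * ((k + 1) * (x - xh) ^ k)) /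
          ((x - xh) ^ (k + 1)) ^ 2) x := by
      intro x hxI hxx
      have h1 : HasDerivAt (fun x => (x - xh) ^ (k + 1)) ((k + 1) * (x - xh) ^ k) x := by
        have := ((hasDerivAt_id x).sub_const xh).fun_pow (k + 1)
        refine this.congr_deriv ?_
        simp
      have h2 := (hfd x hxI).fun_div h1 (pow_ne_zero _ (sub_ne_zero.2 hxx))
      refine h2.congr_of_eventuallyEq ?_
      filter_upwards [isOpen_ne.mem_nhds hxx] with z hz using hFoff z hz
    have hFlim : ContinuousAt F xh := by
      rw [hF, continuousAt_update_same]
      refine HasDerivAt.lhopital_zero_nhdsNE (a := xh) (f := f) (f' := deriv f)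
        (g := fun x => (x - xh) ^ (k + 1)) (g' := fun x => (k + 1) * (x - xh) ^ k) ?_ ?_ ?_ ?_ ?_ ?_
      · filter_upwards [hev] with x hxx using hfd x hxx.1
      · filter_upwards with x
        have := ((hasDerivAt_id x).sub_const xh).fun_pow (k + 1)
        refine this.congr_deriv ?_
        simp
      · filter_upwards [hev] with x hxx
        have := pow_ne_zero k (sub_ne_zero.2 hxx.2)
        positivity
      · have := (hfd xh hx).continuousAt.tendsto.mono_left (nhdsWithin_le_nhds (s := {xh}ᶜ))
        rwa [hf0] at this
      · simpa using lim0.pow (k + 1)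
      · refine ((hGc.tendsto.mono_left nhdsWithin_le_nhds).div_const (k + 1 : ℝ)).congr' ?_
        filter_upwards [hev] with x hxx
        have := pow_ne_zero k (sub_ne_zero.2 hxx.2)
        rw [hGe x hxx.1]
        field_simp
    refine ⟨F, ?_, ?_, ?_⟩
    · refine euler_regularity hx (κ := k + 1) (by omega) hG ?_ ?_
      · intro x hxI
        apply ContinuousAt.continuousWithinAt
        by_cases hxx : x = xh
        · rw [hxx]; exact hFlim
        · exact (hFder x hxI hxx).continuousAt
      · intro x hxI hxx
        refine ⟨(hFder x hxI hxx).differentiableAt, ?_⟩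
        have h0 := sub_ne_zero.2 hxx
        rw [(hFder x hxI hxx).deriv, hFoff x hxx, hGe x hxI]
        push_cast
        field_simp
        ring
    · intro x hxI
      by_cases hxx : x = xh
      · rw [hxx, hf0]; simp
      · have h0 := sub_ne_zero.2 hxx
        rw [hFoff x hxx]
        field_simp
    · rw [hFx, iteratedDeriv_succ', ← hGv, Nat.factorial_succ]
      push_cast
      field_simp

/-! ### The normal form `h y' + y = ρ` with `h > 0` -/

/-- The normal form `h y' + y = ρ` of the equation: `h` is positive off `xh` and vanishes at `xh`
at least quadratically. -/
structure NormalForm (a b xh : ℝ) (n : ℕ∞) (h ρ : ℝ → ℝ) : Prop where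
  mem : xh ∈ Ioo a b
  one_le : 1 ≤ n
  contDiff_h : ContDiffOn ℝ n h (Ioo a b)
  contDiff_ρ : ContDiffOn ℝ n ρ (Ioo a b)
  pos : ∀ x ∈ Ioo a b, x ≠ xh → 0 < h x
  h_xh : h xh = 0
  sq : ∃ C > 0, ∀ᶠ x in 𝓝[≠] xh, h x ≤ C * (x - xh) ^ 2

/-- A `C^n` solution on `(a,b)` of the normal form `h y' + y = ρ`. -/
def Sol (a b : ℝ) (n : ℕ∞) (h ρ y : ℝ → ℝ) : Prop :=
  ContDiffOn ℝ n y (Ioo a b) ∧ ∀ x ∈ Ioo a b, h x * deriv y x + y x = ρ x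

/-- `y` solves `h y' + y = ρ` on `s`. -/
def SolOn (s : Set ℝ) (h ρ y : ℝ → ℝ) : Prop :=
  ∀ x ∈ s, DifferentiableAt ℝ y x ∧ h x * deriv y x + y x = ρ x

section

variable {a b xh : ℝ} {n : ℕ∞} {h ρ : ℝ → ℝ}

lemma NormalForm.deriv_h (N : NormalForm a b xh n h ρ) : deriv h xh = 0 := by
  apply IsLocalMin.deriv_eq_zero
  filter_upwards [Ioo_mem_nhds N.mem.1 N.mem.2] with x hx
  rw [N.h_xh]
  by_cases hxx : x = xh
  · rw [hxx, N.h_xh]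
  · exact (N.pos x hx hxx).le

lemma nhdsGT_le_nhdsNE (x : ℝ) : 𝓝[>] x ≤ 𝓝[≠] x :=
  nhdsWithin_mono _ fun _ hz => ne_of_gt hz

lemma nhdsLT_le_nhdsNE (x : ℝ) : 𝓝[<] x ≤ 𝓝[≠] x :=
  nhdsWithin_mono _ fun _ hz => ne_of_lt hz

/-- The derivative of a continuous solution has a limit at `xh`: the only alternative is that it
blows up on the right, which continuity of `y` excludes. -/
lemma NormalForm.tendsto_deriv (N : NormalForm a b xh n h ρ) {g σ y : ℝ → ℝ} (hg0 : 0 < g xh)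
    (hh : ContDiffOn ℝ 1 h (Ioo a b)) (hg : ContDiffOn ℝ 1 g (Ioo a b))
    (hσ : ContDiffOn ℝ 1 σ (Ioo a b)) (hyc : ContinuousOn y (Ioo a b))
    (hy : OffSol a b xh h g σ y) : ∃ L, Tendsto (deriv y) (𝓝[≠] xh) (𝓝 L) := by
  obtain ⟨C, hC, hsq⟩ := N.sq
  have hnhds := Ioo_mem_nhds N.mem.1 N.mem.2
  have hder : ∀ {f : ℝ → ℝ}, ContDiffOn ℝ 1 f (Ioo a b) → ContinuousAt (deriv f) xh := by
    intro f hf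
    have : ContDiffOn ℝ 0 (deriv f) (Ioo a b) :=
      ((contDiffOn_succ_iff_deriv_of_isOpen isOpen_Ioo).1 (by simpa using hf)).2.2
    exact this.continuousOn.continuousAt hnhds
  have hyx := hyc.continuousAt hnhds
  have hoff := OffSol.differentiate (fun x hx hxx => (N.pos x hx hxx).ne') hh hg hσ hy
  have hev : ∀ᶠ x in 𝓝[≠] xh, 0 < h x ∧ h x ≤ C * (x - xh) ^ 2 ∧
      HasDerivAt (deriv y) (deriv (deriv y) x) x ∧
      h x * deriv (deriv y) x + (g x + deriv h x) * deriv y x =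
        deriv σ x - deriv g x * y x := by
    filter_upwards [eventually_ne_Ioo N.mem, hsq] with x hx hx2
    exact ⟨N.pos x hx.1 hx.2, hx2, (hoff x hx.1 hx.2).1.hasDerivAt, (hoff x hx.1 hx.2).2⟩
  have hG : ContinuousAt (fun x => g x + deriv h x) xh :=
    (hg.continuousOn.continuousAt hnhds).add (hder hh)
  have hT : ContinuousAt (fun x => deriv σ x - deriv g x * y x) xh :=
    (hder hσ).sub ((hder hg).mul hyx)
  have hG0 : 0 < g xh + deriv h xh := by rw [N.deriv_h]; simpa using hg0
  refine ⟨(deriv σ xh - deriv g xh * y xh) / (g xh + deriv h xh), ?_⟩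
  rw [← nhdsLT_sup_nhdsGT, tendsto_sup]
  constructor
  · exact left_tendsto hC hG0 (hev.filter_mono (nhdsLT_le_nhdsNE xh))
      (hG.tendsto.mono_left nhdsWithin_le_nhds) (hT.tendsto.mono_left nhdsWithin_le_nhds)
  · rcases right_dichotomy hC hG0 (hev.filter_mono (nhdsGT_le_nhdsNE xh))
      (hG.tendsto.mono_left nhdsWithin_le_nhds) (hT.tendsto.mono_left nhdsWithin_le_nhds)
      with H | H
    · exact H
    · refine (H.not_deriv ?_ hyx).elim
      filter_upwards [(eventually_ne_Ioo N.mem).filter_mono (nhdsGT_le_nhdsNE xh)] with x hx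
      exact (hy x hx.1 hx.2).1

lemma NormalForm.contDiffOn (N : NormalForm a b xh n h ρ) {y : ℝ → ℝ}
    (hyc : ContinuousOn y (Ioo a b)) (hy : SolOn (Ioo a b \ {xh}) h ρ y) :
    ContDiffOn ℝ n y (Ioo a b) := by
  apply contDiffOn_of_nat
  intro j hj
  have hj' : ((j : ℕ) : WithTop ℕ∞) ≤ (n : WithTop ℕ∞) := by exact_mod_cast hj
  refine regularity N.mem (fun x hx hxx => (N.pos x hx hxx).ne') (fun g => 0 < g xh) ?_ ?_ j
    (N.contDiff_h.of_le hj') (fun _ => 1) ρ y one_pos contDiffOn_const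
    (N.contDiff_ρ.of_le hj') hyc ?_
  · intro g hg
    simpa [N.deriv_h] using hg
  · intro g σ y hg0 hh hg hσ hyc hy
    exact N.tendsto_deriv hg0 hh hg hσ hyc hy
  · intro x hx hxx
    have := hy x ⟨hx, hxx⟩
    exact ⟨this.1, by rw [one_mul]; exact this.2⟩

lemma NormalForm.continuousAt_ρ (N : NormalForm a b xh n h ρ) : ContinuousAt ρ xh :=
  N.contDiff_ρ.continuousOn.continuousAt (Ioo_mem_nhds N.mem.1 N.mem.2)

lemma NormalForm.left_tendsto (N : NormalForm a b xh n h ρ) {y : ℝ → ℝ}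
    (hy : SolOn (Ioo a xh) h ρ y) : Tendsto y (𝓝[<] xh) (𝓝 (ρ xh)) := by
  obtain ⟨C, hC, hsq⟩ := N.sq
  have := SingularODE19.left_tendsto (w := y) (w' := deriv y) (g := fun _ => 1) hC one_pos (by
    filter_upwards [hsq.filter_mono (nhdsLT_le_nhdsNE xh), Ioo_mem_nhdsLT N.mem.1] with x h1 hx
    exact ⟨N.pos x ⟨hx.1, hx.2.trans N.mem.2⟩ hx.2.ne, h1, (hy x hx).1.hasDerivAt, by
      rw [one_mul]; exact (hy x hx).2⟩)
    tendsto_const_nhds (N.continuousAt_ρ.tendsto.mono_left nhdsWithin_le_nhds)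
  simpa using this

lemma NormalForm.right_dichotomy (N : NormalForm a b xh n h ρ) {y : ℝ → ℝ}
    (hy : SolOn (Ioo xh b) h ρ y) : Tendsto y (𝓝[>] xh) (𝓝 (ρ xh)) ∨ BlowsUp xh y := by
  obtain ⟨C, hC, hsq⟩ := N.sq
  have := SingularODE19.right_dichotomy (w := y) (w' := deriv y) (g := fun _ => 1) hC one_pos (by
    filter_upwards [hsq.filter_mono (nhdsGT_le_nhdsNE xh), Ioo_mem_nhdsGT N.mem.2] with x h1 hx
    exact ⟨N.pos x ⟨N.mem.1.trans hx.1, hx.2⟩ hx.1.ne', h1, (hy x hx).1.hasDerivAt, by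
      rw [one_mul]; exact (hy x hx).2⟩)
    tendsto_const_nhds (N.continuousAt_ρ.tendsto.mono_left nhdsWithin_le_nhds)
  simpa using this

lemma exists_antideriv {c d : ℝ} (hcd : c < d) {f : ℝ → ℝ} (hf : ContinuousOn f (Ioo c d)) :
    ∃ F : ℝ → ℝ, ∀ x ∈ Ioo c d, HasDerivAt F (f x) x := by
  obtain ⟨x0, hx0⟩ := exists_between hcd
  refine ⟨fun x => ∫ t in x0..x, f t, fun x hx => ?_⟩
  apply intervalIntegral.integral_hasDerivAt_right
  · apply ContinuousOn.intervalIntegrable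
    exact hf.mono (ordConnected_Ioo.uIcc_subset hx0 hx)
  · exact hf.stronglyMeasurableAtFilter isOpen_Ioo x hx
  · exact hf.continuousAt (Ioo_mem_nhds hx.1 hx.2)

/-- On an interval where `h` does not vanish there is an integrating factor `E = exp ∫ 1/h`, and
an antiderivative `F` of `E ρ / h`; the solutions are `(F + c) / E`. -/
lemma exists_integrating_factor {c d : ℝ} (hcd : c < d) (hh : ContinuousOn h (Ioo c d))
    (hρ : ContinuousOn ρ (Ioo c d)) (hne : ∀ x ∈ Ioo c d, h x ≠ 0) :
    ∃ E F : ℝ → ℝ, (∀ x, 0 < E x) ∧ (∀ x ∈ Ioo c d, HasDerivAt E (E x / h x) x) ∧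
      (∀ x ∈ Ioo c d, HasDerivAt F (E x * ρ x / h x) x) := by
  obtain ⟨H, hH⟩ := exists_antideriv hcd (f := fun x => (h x)⁻¹) (hh.inv₀ hne)
  have hE : ∀ x ∈ Ioo c d, HasDerivAt (fun x => Real.exp (H x)) (Real.exp (H x) / h x) x :=
    fun x hx => (hH x hx).exp
  obtain ⟨F, hF⟩ := exists_antideriv hcd (f := fun x => Real.exp (H x) * ρ x / h x)
    (ContinuousOn.div (ContinuousOn.mul
      (fun x hx => (hE x hx).continuousAt.continuousWithinAt) hρ) hh hne)
  exact ⟨fun x => Real.exp (H x), F, fun x => Real.exp_pos _, hE, hF⟩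

lemma solOn_of_integrating_factor {s : Set ℝ} {E F : ℝ → ℝ} (hE0 : ∀ x, 0 < E x)
    (hne : ∀ x ∈ s, h x ≠ 0) (hE : ∀ x ∈ s, HasDerivAt E (E x / h x) x)
    (hF : ∀ x ∈ s, HasDerivAt F (E x * ρ x / h x) x) :
    SolOn s h ρ (fun x => F x / E x) := by
  intro x hx
  have hd := (hF x hx).fun_div (hE x hx) (hE0 x).ne'
  refine ⟨hd.differentiableAt, ?_⟩
  rw [hd.deriv]
  have := (hE0 x).ne'
  have := hne x hx
  field_simp
  ring

lemma NormalForm.exists_left (N : NormalForm a b xh n h ρ) :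
    ∃ y z : ℝ → ℝ, SolOn (Ioo a xh) h ρ y ∧ SolOn (Ioo a xh) h (fun _ => 0) z ∧
      ∀ x, 0 < z x := by
  have hsub : Ioo a xh ⊆ Ioo a b := Ioo_subset_Ioo_right N.mem.2.le
  have hne : ∀ x ∈ Ioo a xh, h x ≠ 0 := fun x hx => (N.pos x (hsub hx) hx.2.ne).ne'
  obtain ⟨E, F, hE0, hE, hF⟩ := exists_integrating_factor N.mem.1
    (N.contDiff_h.continuousOn.mono hsub) (N.contDiff_ρ.continuousOn.mono hsub) hne
  refine ⟨fun x => F x / E x, fun x => 1 / E x, solOn_of_integrating_factor hE0 hne hE hF,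
    solOn_of_integrating_factor hE0 hne hE ?_, fun x => one_div_pos.2 (hE0 x)⟩
  intro x hx
  simpa using hasDerivAt_const x (1 : ℝ)

/-- On the right the integrating factor tends to `0` at `xh`, and the solution with limit `ρ xh`
is `(F - F(xh+)) / E`. -/
lemma NormalForm.exists_right (N : NormalForm a b xh n h ρ) :
    ∃ y : ℝ → ℝ, SolOn (Ioo xh b) h ρ y ∧ Tendsto y (𝓝[>] xh) (𝓝 (ρ xh)) := by
  have hsub : Ioo xh b ⊆ Ioo a b := Ioo_subset_Ioo_left N.mem.1.le
  have hpos : ∀ x ∈ Ioo xh b, 0 < h x := fun x hx => N.pos x (hsub hx) hx.1.ne'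
  have hne : ∀ x ∈ Ioo xh b, h x ≠ 0 := fun x hx => (hpos x hx).ne'
  obtain ⟨E, F, hE0, hE, hF⟩ := exists_integrating_factor N.mem.2
    (N.contDiff_h.continuousOn.mono hsub) (N.contDiff_ρ.continuousOn.mono hsub) hne
  -- a bound for `ρ` on some `(xh, u)`
  set M := |ρ xh| + 1 with hM
  have hρM : ∀ᶠ x in 𝓝 xh, |ρ x| < M :=
    N.continuousAt_ρ.abs.tendsto.eventually_lt_const (by linarith)
  obtain ⟨u, hu, hub⟩ := mem_nhdsGT_iff_exists_Ioo_subset.1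
    (inter_mem (mem_nhdsWithin_of_mem_nhds hρM) (Ioo_mem_nhdsGT N.mem.2))
  have hu : xh < u := hu
  have hubb : ∀ x ∈ Ioo xh u, x ∈ Ioo xh b := fun x hx => (hub hx).2
  have hbd : ∀ x ∈ Ioo xh u, |ρ x| < M := fun x hx => (hub hx).1
  have hcomb : ∀ s : ℝ, |s| ≤ 1 → MonotoneOn (fun x => M * E x + s * F x) (Ioo xh u) := by
    intro s hs x hx z hz hxz
    have := antitoneOn_Ioo_of_hasDerivAt (f := fun x => -(M * E x + s * F x))
      (f' := fun x => -(M * (E x / h x) + s * (E x * ρ x / h x))) (c := xh) (d := u)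
      (fun x hx => (((hE x (hubb x hx)).const_mul M).fun_add
        ((hF x (hubb x hx)).const_mul s)).fun_neg)
      (fun x hx => by
        have h1 : |s * ρ x| ≤ M := by
          rw [abs_mul]
          calc |s| * |ρ x| ≤ 1 * M := by
                gcongr
                exact (hbd x hx).le
            _ = M := one_mul M
        have h2 : 0 ≤ E x / h x := div_nonneg (hE0 x).le (hpos x (hubb x hx)).le
        have h3 : M * (E x / h x) + s * (E x * ρ x / h x) = (E x / h x) * (M + s * ρ x) := by
          ring
        rw [h3]
        have := mul_nonneg h2 (show 0 ≤ M + s * ρ x by linarith [neg_abs_le (s * ρ x)])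
        linarith) hx hz hxz
    simp only at this ⊢
    linarith
  have hplus : MonotoneOn (fun x => M * E x + F x) (Ioo xh u) := by
    simpa using hcomb 1 (by simp)
  have hminus : MonotoneOn (fun x => M * E x - F x) (Ioo xh u) := by
    simpa [sub_eq_add_neg] using hcomb (-1) (by simp)
  have hM0 : 0 < M := by positivity
  have hEmono : MonotoneOn E (Ioo xh u) := by
    intro x hx z hz hxz
    have := hcomb 0 (by simp) hx hz hxz
    simp only [zero_mul, add_zero] at this
    exact le_of_mul_le_mul_left this hM0
  obtain ⟨x1, hx1⟩ := exists_between hu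
  -- `1 / E` solves the homogeneous equation and cannot tend to `0`
  have hElim : Tendsto E (𝓝[>] xh) (𝓝 0) := by
    have N0 : NormalForm a b xh n h (fun _ => 0) :=
      ⟨N.mem, N.one_le, N.contDiff_h, contDiffOn_const, N.pos, N.h_xh, N.sq⟩
    have hz : SolOn (Ioo xh b) h (fun _ => 0) (fun x => 1 / E x) :=
      solOn_of_integrating_factor hE0 hne hE (fun x _ => by
        simpa using hasDerivAt_const x (1 : ℝ))
    have hlow : ∀ᶠ x in 𝓝[>] xh, 1 / E x1 ≤ 1 / E x := by
      filter_upwards [Ioo_mem_nhdsGT hx1.1] with x hx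
      exact one_div_le_one_div_of_le (hE0 x) (hEmono ⟨hx.1, hx.2.trans hx1.2⟩ hx1 hx.2.le)
    rcases N0.right_dichotomy hz with H | ⟨K, hK, H⟩
    · have := ge_of_tendsto H hlow
      have := one_div_pos.2 (hE0 x1)
      linarith
    · have H' : ∀ᶠ x in 𝓝[>] xh, K / (x - xh) ≤ 1 / E x := by
        rcases H with H | H
        · exact H
        · exact H.mono fun x hx => hx.trans (by have := one_div_pos.2 (hE0 x); linarith)
      have hlin : Tendsto (fun x => (x - xh) / K) (𝓝[>] xh) (𝓝 0) := by
        have : ContinuousAt (fun x : ℝ => (x - xh) / K) xh := by fun_prop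
        simpa using this.tendsto.mono_left nhdsWithin_le_nhds
      refine squeeze_zero' (Eventually.of_forall fun x => (hE0 x).le) ?_ hlin
      filter_upwards [H', self_mem_nhdsWithin] with x hx hxx
      have hp : 0 < x - xh := sub_pos.2 hxx
      rw [div_le_div_iff₀ hp (hE0 x)] at hx
      rw [le_div_iff₀ hK]
      linarith
  -- `M E + F` is monotone and bounded below, so `F` has a limit at `xh`
  obtain ⟨c, hc⟩ : ∃ c, Tendsto F (𝓝[>] xh) (𝓝 c) := by
    have hbdd : BddBelow ((fun x => M * E x + F x) '' Ioo xh x1) := by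
      refine ⟨-(M * E x1 - F x1), ?_⟩
      rintro _ ⟨x, hx, rfl⟩
      have := hminus ⟨hx.1, hx.2.trans hx1.2⟩ hx1 hx.2.le
      have := mul_pos hM0 (hE0 x)
      simp only at *
      linarith
    have h1 := MonotoneOn.tendsto_nhdsWithin_Ioo_right (nonempty_Ioo.2 hx1.1)
      (hplus.mono (Ioo_subset_Ioo_right hx1.2.le)) hbdd
    exact ⟨_, by simpa using h1.sub (hElim.const_mul M)⟩
  have hFc : ∀ x ∈ Ioo xh u, |F x - c| ≤ M * E x := by
    intro x hx
    have e1 : Tendsto (fun z => M * E z + F z) (𝓝[>] xh) (𝓝 c) := by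
      simpa using (hElim.const_mul M).add hc
    have e2 : Tendsto (fun z => M * E z - F z) (𝓝[>] xh) (𝓝 (-c)) := by
      simpa using (hElim.const_mul M).sub hc
    have hev : ∀ᶠ z in 𝓝[>] xh, z ∈ Ioo xh x := Ioo_mem_nhdsGT hx.1
    have l1 := le_of_tendsto e1 (hev.mono fun z hz =>
      hplus ⟨hz.1, hz.2.trans hx.2⟩ hx hz.2.le)
    have l2 := le_of_tendsto e2 (hev.mono fun z hz =>
      hminus ⟨hz.1, hz.2.trans hx.2⟩ hx hz.2.le)
    simp only at l1 l2
    rw [abs_le]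
    constructor <;> linarith
  have hsol : SolOn (Ioo xh b) h ρ (fun x => (F x - c) / E x) :=
    solOn_of_integrating_factor (F := fun x => F x - c) hE0 hne hE
      (fun x hx => (hF x hx).sub_const c)
  refine ⟨_, hsol, ?_⟩
  rcases N.right_dichotomy hsol with H | H
  · exact H
  · -- a bounded function does not blow up
    exfalso
    obtain ⟨K, hK, H⟩ := H
    have hO : ∀ᶠ x in 𝓝[>] xh, K / (x - xh) ≤ M := by
      have hy : ∀ᶠ x in 𝓝[>] xh, |(F x - c) / E x| ≤ M := by
        filter_upwards [Ioo_mem_nhdsGT hu] with x hx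
        rw [abs_div, abs_of_pos (hE0 x), div_le_iff₀ (hE0 x)]
        exact hFc x hx
      rcases H with H | H
      · filter_upwards [H, hy] with x h1 h2 using h1.trans ((le_abs_self _).trans h2)
      · filter_upwards [H, hy] with x h1 h2 using h1.trans ((neg_le_abs _).trans h2)
    exact BlowsUp.not_tendsto (w := fun _ => M) ⟨K, hK, Or.inl hO⟩ tendsto_const_nhds

/-- The function equal to `yl` left of `xh`, to `c` at `xh` and to `yr` right of `xh`. -/
noncomputable def glue (xh c : ℝ) (yl yr : ℝ → ℝ) (x : ℝ) : ℝ :=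
  if x < xh then yl x else if x = xh then c else yr x

lemma SolOn.congr {s : Set ℝ} (hs : IsOpen s) {y z : ℝ → ℝ} (hy : SolOn s h ρ y)
    (hyz : EqOn z y s) : SolOn s h ρ z := by
  intro x hx
  have e : z =ᶠ[𝓝 x] y := by filter_upwards [hs.mem_nhds hx] with t ht using hyz ht
  refine ⟨e.differentiableAt_iff.2 (hy x hx).1, ?_⟩
  rw [e.deriv_eq, hyz hx]
  exact (hy x hx).2

lemma NormalForm.sol_of_continuous (N : NormalForm a b xh n h ρ) {y : ℝ → ℝ}
    (hl : SolOn (Ioo a xh) h ρ y) (hr : SolOn (Ioo xh b) h ρ y) (hxh : y xh = ρ xh)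
    (hlim : Tendsto y (𝓝[>] xh) (𝓝 (ρ xh))) : Sol a b n h ρ y := by
  have hoff : SolOn (Ioo a b \ {xh}) h ρ y := by
    rintro x ⟨hx, hxx⟩
    rcases lt_or_gt_of_ne hxx with hlt | hgt
    · exact hl x ⟨hx.1, hlt⟩
    · exact hr x ⟨hgt, hx.2⟩
  have hc : ContinuousOn y (Ioo a b) := by
    intro x hx
    apply ContinuousAt.continuousWithinAt
    by_cases hxx : x = xh
    · rw [hxx, continuousAt_iff_punctured_nhds, ← nhdsLT_sup_nhdsGT, tendsto_sup, hxh]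
      exact ⟨N.left_tendsto hl, hlim⟩
    · exact (hoff x ⟨hx, hxx⟩).1.continuousAt
  refine ⟨N.contDiffOn hc hoff, fun x hx => ?_⟩
  by_cases hxx : x = xh
  · rw [hxx, N.h_xh, hxh]; ring
  · exact (hoff x ⟨hx, hxx⟩).2

lemma NormalForm.sol_glue (N : NormalForm a b xh n h ρ) {yl yr : ℝ → ℝ}
    (hl : SolOn (Ioo a xh) h ρ yl) (hr : SolOn (Ioo xh b) h ρ yr)
    (hlim : Tendsto yr (𝓝[>] xh) (𝓝 (ρ xh))) : Sol a b n h ρ (glue xh (ρ xh) yl yr) := by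
  have er : EqOn (glue xh (ρ xh) yl yr) yr (Ioi xh) := fun x hx => by
    have hx : xh < x := hx
    simp [glue, hx.not_gt, hx.ne']
  refine N.sol_of_continuous (hl.congr isOpen_Ioo fun x hx => ?_)
    (hr.congr isOpen_Ioo fun x hx => er hx.1) (by simp [glue]) (hlim.congr' ?_)
  · simp [glue, hx.2]
  · filter_upwards [self_mem_nhdsWithin] with x hx using (er hx).symm

lemma NormalForm.homogeneous (N : NormalForm a b xh n h ρ) :
    NormalForm a b xh n h (fun _ => 0) :=
  ⟨N.mem, N.one_le, N.contDiff_h, contDiffOn_const, N.pos, N.h_xh, N.sq⟩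

lemma Sol.differentiableAt (hn : 1 ≤ n) {y : ℝ → ℝ} (hy : Sol a b n h ρ y) {x : ℝ}
    (hx : x ∈ Ioo a b) : DifferentiableAt ℝ y x :=
  ContDiffOn.differentiableAt_Ioo (hy.1.of_le (by exact_mod_cast hn)) hx

lemma Sol.add_smul (hn : 1 ≤ n) {ρ' y z : ℝ → ℝ} (hy : Sol a b n h ρ y) (hz : Sol a b n h ρ' z)
    (c : ℝ) : Sol a b n h (fun x => ρ x + c * ρ' x) (fun x => y x + c * z x) := by
  refine ⟨hy.1.add (contDiffOn_const.mul hz.1), fun x hx => ?_⟩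
  have dy := hy.differentiableAt hn hx
  have dz := hz.differentiableAt hn hx
  rw [deriv_fun_add dy (dz.const_mul c), deriv_const_mul_field]
  linear_combination hy.2 x hx + c * hz.2 x hx

/-- Existence, uniqueness on `A`, and a one-parameter family on `B` (nontrivial on `B'`) for the
functions satisfying `P`. -/
def SolutionStructure (P : (ℝ → ℝ) → Prop) (A B B' : Set ℝ) : Prop :=
  (∃ y : ℝ → ℝ, P y) ∧
  (∀ y y' : ℝ → ℝ, P y → P y' → EqOn y y' A) ∧
  (∃ y₀ z : ℝ → ℝ, P y₀ ∧ (∃ x ∈ B', z x ≠ 0) ∧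
    (∀ c : ℝ, ∃ y : ℝ → ℝ, P y ∧ EqOn y (fun x => y₀ x + c * z x) B) ∧
    (∀ y : ℝ → ℝ, P y → ∃ c : ℝ, EqOn y (fun x => y₀ x + c * z x) B))

/-- A homogeneous solution on the right: `v²` is nonincreasing and `v xh = 0`. -/
lemma NormalForm.eq_zero_right (N : NormalForm a b xh n h ρ) {v : ℝ → ℝ}
    (hv : Sol a b n h (fun _ => 0) v) : ∀ x ∈ Ico xh b, v x = 0 := by
  have hsub : Ico xh b ⊆ Ioo a b := fun x hx => ⟨N.mem.1.trans_le hx.1, hx.2⟩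
  have hv0 : v xh = 0 := by simpa [N.h_xh] using hv.2 xh N.mem
  have hd := fun x hx => (hv.differentiableAt N.one_le (x := x) hx).hasDerivAt
  have hanti : AntitoneOn (fun x => v x ^ 2) (Ico xh b) := by
    apply antitoneOn_of_deriv_nonpos (convex_Ico _ _)
    · exact (hv.1.continuousOn.mono hsub).pow 2
    · intro x hx
      exact ((hd x (hsub (interior_subset hx))).fun_pow 2).differentiableAt.differentiableWithinAt
    · intro x hx
      rw [interior_Ico] at hx
      have hxI := hsub ⟨hx.1.le, hx.2⟩
      rw [((hd x hxI).fun_pow 2).deriv]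
      have h0 := N.pos x hxI hx.1.ne'
      have he := hv.2 x hxI
      have : v x * deriv v x ≤ 0 := by
        by_contra hcon
        have := mul_pos h0 (not_le.1 hcon)
        have : h x * (v x * deriv v x) = - v x ^ 2 := by linear_combination v x * he
        nlinarith [sq_nonneg (v x)]
      simp
      linarith
  intro x hx
  have := hanti ⟨le_rfl, N.mem.2⟩ hx hx.1
  simp only [hv0] at this
  nlinarith [sq_nonneg (v x)]

theorem NormalForm.solutionStructure (N : NormalForm a b xh n h ρ) :
    SolutionStructure (Sol a b n h ρ) (Ico xh b) (Ioc a xh) (Ioo a xh) := by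
  obtain ⟨yl, zl, hyl, hzl, hz0⟩ := N.exists_left
  obtain ⟨yr, hyr, hlim⟩ := N.exists_right
  have hy0 := N.sol_glue hyl hyr hlim
  have hzr : SolOn (Ioo xh b) h (fun _ => 0) (fun _ => 0) := fun x _ => by simp
  have hz := N.homogeneous.sol_glue hzl hzr tendsto_const_nhds
  set y0 := glue xh (ρ xh) yl yr
  set z := glue xh 0 zl (fun _ => 0) with hzdef
  have hzpos : ∀ x < xh, 0 < z x := fun x hx => by simpa [hzdef, glue, hx] using hz0 x
  have hzx : z xh = 0 := by simp [hzdef, glue]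
  have hdiff : ∀ y y' : ℝ → ℝ, Sol a b n h ρ y → Sol a b n h ρ y' →
      Sol a b n h (fun _ => 0) (fun x => y x + (-1) * y' x) := by
    intro y y' hy hy'
    have := hy.add_smul N.one_le hy' (-1)
    simpa using this
  obtain ⟨x1, hx1⟩ := exists_between N.mem.1
  refine ⟨⟨y0, hy0⟩, ?_, y0, z, hy0, ⟨x1, hx1, (hzpos x1 hx1.2).ne'⟩, ?_, ?_⟩
  · intro y y' hy hy' x hx
    have := N.eq_zero_right (hdiff y y' hy hy') x hx
    linarith
  · intro c
    refine ⟨fun x => y0 x + c * z x, ?_, fun x _ => rfl⟩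
    simpa using hy0.add_smul N.one_le hz c
  · intro y hy
    have hv := hdiff y y0 hy hy0
    set v : ℝ → ℝ := fun x => y x + (-1) * y0 x with hvdef
    have hsub : Ioo a xh ⊆ Ioo a b := Ioo_subset_Ioo_right N.mem.2.le
    have hquot : ∀ x ∈ Ioo a xh, HasDerivAt (fun x => v x / z x) 0 x := by
      intro x hx
      have d1 := (hv.differentiableAt N.one_le (hsub hx)).hasDerivAt
      have d2 := (hz.differentiableAt N.one_le (hsub hx)).hasDerivAt
      refine (d1.fun_div d2 (hzpos x hx.2).ne').congr_deriv ?_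
      have h0 := (N.pos x (hsub hx) hx.2.ne).ne'
      have e1 := hv.2 x (hsub hx)
      have e2 := hz.2 x (hsub hx)
      have : deriv v x * z x - v x * deriv z x = 0 := by
        apply mul_left_cancel₀ h0
        linear_combination z x * e1 - v x * e2
      rw [this, zero_div]
    refine ⟨v x1 / z x1, fun x hx => ?_⟩
    rcases eq_or_lt_of_le hx.2 with hxx | hxx
    · have e1 : y xh = ρ xh := by simpa [N.h_xh] using hy.2 xh N.mem
      have e2 : y0 xh = ρ xh := by simpa [N.h_xh] using hy0.2 xh N.mem
      simp only
      rw [hxx, hzx, e1, e2]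
      ring
    · have hconst := isOpen_Ioo.is_const_of_deriv_eq_zero isPreconnected_Ioo
        (fun x hx => (hquot x hx).differentiableAt.differentiableWithinAt)
        (fun x hx => (hquot x hx).deriv) (show x ∈ Ioo a xh from ⟨hx.1, hxx⟩) hx1
      simp only at hconst ⊢
      have hzx0 := (hzpos x hxx).ne'
      rw [← hconst, div_mul_cancel₀ _ hzx0]
      simp only [hvdef]
      ring

theorem NormalForm.not_integrable (N : NormalForm a b xh n h ρ) {y : ℝ → ℝ}
    (hy : SolOn (Ioo a b \ {xh}) h ρ y)
    (hext : ¬ ∃ ytilde : ℝ → ℝ, ContinuousOn ytilde (Ioo a b) ∧ EqOn ytilde y (Ioo a b \ {xh})) :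
    ∀ ε > (0:ℝ), ¬ IntegrableOn y ((Ioo a b ∩ Ioo (xh - ε) (xh + ε)) \ {xh}) volume := by
  intro ε hε hInt
  have hl : SolOn (Ioo a xh) h ρ y := fun x hx => hy x ⟨⟨hx.1, hx.2.trans N.mem.2⟩, hx.2.ne⟩
  have hr : SolOn (Ioo xh b) h ρ y := fun x hx => hy x ⟨⟨N.mem.1.trans hx.1, hx.2⟩, hx.1.ne'⟩
  rcases N.right_dichotomy hr with H | H
  · apply hext
    refine ⟨glue xh (ρ xh) y y, (N.sol_glue hl hr H).1.continuousOn, ?_⟩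
    rintro x ⟨-, hxx⟩
    have hxx : x ≠ xh := hxx
    simp [glue, hxx]
  · refine H.not_integrableOn (ε := min b (xh + ε)) (lt_min N.mem.2 (by linarith))
      (hInt.mono_set ?_)
    rintro x ⟨h1, h2⟩
    have h3 := h2.trans_le (min_le_left _ _)
    have h4 := h2.trans_le (min_le_right _ _)
    exact ⟨⟨⟨N.mem.1.trans h1, h3⟩, by linarith, h4⟩, h1.ne'⟩

end

/-! ### Reflection and reduction to the normal form -/

lemma normalForm_of_factor {a b xh : ℝ} (hx : xh ∈ Ioo a b) {n : ℕ∞} (hn : 1 ≤ n)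
    {h ρ K : ℝ → ℝ} (hh : ContDiffOn ℝ n h (Ioo a b)) (hρ : ContDiffOn ℝ n ρ (Ioo a b))
    {l : ℕ} (hl2 : 2 ≤ l) (hleven : Even l) (hK : ContinuousOn K (Ioo a b))
    (hfac : ∀ x ∈ Ioo a b, h x = (x - xh) ^ l * K x) (hK0 : 0 < K xh)
    (hne : ∀ x ∈ Ioo a b, x ≠ xh → h x ≠ 0) : NormalForm a b xh n h ρ := by
  have hKpos : ∀ x ∈ Ioo a b, 0 < K x := by
    intro x hxI
    by_contra hcon
    obtain ⟨z, hz, hz0⟩ := isPreconnected_Ioo.intermediate_value hxI hx hK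
      (show (0 : ℝ) ∈ Icc (K x) (K xh) from ⟨not_lt.1 hcon, hK0.le⟩)
    by_cases hzx : z = xh
    · rw [hzx] at hz0; linarith
    · exact hne z hz hzx (by rw [hfac z hz, hz0, mul_zero])
  have hl0 : l ≠ 0 := by omega
  refine ⟨hx, hn, hh, hρ, ?_, ?_, ?_⟩
  · intro x hxI hxx
    rw [hfac x hxI]
    exact mul_pos (hleven.pow_pos (sub_ne_zero.2 hxx)) (hKpos x hxI)
  · rw [hfac xh hx, sub_self, zero_pow hl0, zero_mul]
  · have hnhds := Ioo_mem_nhds hx.1 hx.2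
    have hc : ContinuousAt (fun x => (x - xh) ^ (l - 2) * K x) xh :=
      ContinuousAt.mul (by fun_prop) (hK.continuousAt hnhds)
    set M := (xh - xh) ^ (l - 2) * K xh with hM
    refine ⟨|M| + 1, by positivity, ?_⟩
    filter_upwards [(eventually_ne_Ioo hx), nhdsWithin_le_nhds
      (hc.tendsto.eventually_lt_const (show M < |M| + 1 by linarith [le_abs_self M]))]
      with x hxI hxM
    have e : h x = (x - xh) ^ (l - 2) * K x * (x - xh) ^ 2 := by
      rw [hfac x hxI.1]
      obtain ⟨k, rfl⟩ : ∃ k, l = k + 2 := ⟨l - 2, by omega⟩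
      rw [Nat.add_sub_cancel]
      ring
    rw [e]
    have hp : 0 ≤ (x - xh) ^ 2 := sq_nonneg _
    exact mul_le_mul_of_nonneg_right (le_of_lt hxM) hp

lemma neg_mem_Ioo {c d x : ℝ} (hx : x ∈ Ioo c d) : -x ∈ Ioo (-d) (-c) :=
  ⟨neg_lt_neg hx.2, neg_lt_neg hx.1⟩

lemma neg_mem_Ioo' {c d x : ℝ} (hx : x ∈ Ioo (-d) (-c)) : -x ∈ Ioo c d := by
  have := neg_mem_Ioo hx
  rwa [neg_neg, neg_neg] at this

lemma ContDiffOn.comp_neg_Ioo {a b : ℝ} {n : ℕ∞} {f : ℝ → ℝ} (hf : ContDiffOn ℝ n f (Ioo a b)) :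
    ContDiffOn ℝ n (fun x => f (-x)) (Ioo (-b) (-a)) :=
  hf.comp contDiff_neg.contDiffOn (fun _ hx => neg_mem_Ioo' hx)

/-- The reflection `x ↦ -x` turns `h y' + y = ρ` into the same equation for `-h(-x)`, `ρ(-x)`. -/
lemma Sol.reflect {a b : ℝ} {n : ℕ∞} {h ρ y : ℝ → ℝ} (hy : Sol a b n h ρ y) :
    Sol (-b) (-a) n (fun x => -h (-x)) (fun x => ρ (-x)) (fun x => y (-x)) := by
  refine ⟨ContDiffOn.comp_neg_Ioo hy.1, fun x hx => ?_⟩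
  rw [deriv_comp_neg]
  linear_combination hy.2 (-x) (neg_mem_Ioo' hx)

lemma Sol.of_reflect {a b : ℝ} {n : ℕ∞} {h ρ y : ℝ → ℝ}
    (hy : Sol (-b) (-a) n (fun x => -h (-x)) (fun x => ρ (-x)) y) :
    Sol a b n h ρ (fun x => y (-x)) := by
  have := hy.reflect
  simpa only [neg_neg] using this

lemma solutionStructure_of_reflect {a b xh : ℝ} {n : ℕ∞} {h ρ : ℝ → ℝ}
    (H : SolutionStructure (Sol (-b) (-a) n (fun x => -h (-x)) (fun x => ρ (-x)))
      (Ico (-xh) (-a)) (Ioc (-b) (-xh)) (Ioo (-b) (-xh))) :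
    SolutionStructure (Sol a b n h ρ) (Ioc a xh) (Ico xh b) (Ioo xh b) := by
  have mB : ∀ x ∈ Ico xh b, -x ∈ Ioc (-b) (-xh) := fun x hx =>
    ⟨neg_lt_neg hx.2, neg_le_neg hx.1⟩
  obtain ⟨⟨y, hy⟩, huniq, y0, z, hy0, ⟨x1, hx1, hz⟩, hfam, hfam'⟩ := H
  refine ⟨⟨_, hy.of_reflect⟩, ?_, fun x => y0 (-x), fun x => z (-x), hy0.of_reflect,
    ⟨-x1, neg_mem_Ioo' hx1, by simpa using hz⟩, ?_, ?_⟩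
  · intro y y' hy hy' x hx
    have := huniq _ _ hy.reflect hy'.reflect
      (show -x ∈ Ico (-xh) (-a) from ⟨neg_le_neg hx.2, neg_lt_neg hx.1⟩)
    simpa using this
  · intro c
    obtain ⟨y, hy, he⟩ := hfam c
    exact ⟨_, hy.of_reflect, fun x hx => he (mB x hx)⟩
  · intro y hy
    obtain ⟨c, hc⟩ := hfam' _ hy.reflect
    refine ⟨c, fun x hx => ?_⟩
    have := hc (mB x hx)
    simpa using this

/-- The statement on non-integrability for `-h(-x)`, `ρ(-x)`, read back through `x ↦ -x`. -/
lemma not_integrable_of_reflect {a b xh : ℝ} {n : ℕ∞} {h ρ : ℝ → ℝ}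
    (N : NormalForm (-b) (-a) (-xh) n (fun x => -h (-x)) (fun x => ρ (-x))) {y : ℝ → ℝ}
    (hy : SolOn (Ioo a b \ {xh}) h ρ y)
    (hext : ¬ ∃ ytilde : ℝ → ℝ, ContinuousOn ytilde (Ioo a b) ∧ EqOn ytilde y (Ioo a b \ {xh})) :
    ∀ ε > (0:ℝ), ¬ IntegrableOn y ((Ioo a b ∩ Ioo (xh - ε) (xh + ε)) \ {xh}) volume := by
  intro ε hε hInt
  have hmem : ∀ x ∈ Ioo a b \ {xh}, -x ∈ Ioo (-b) (-a) \ {-xh} := by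
    rintro x ⟨hx, hxx⟩
    exact ⟨neg_mem_Ioo hx, fun h => hxx (neg_injective h)⟩
  have hmem' : ∀ x ∈ Ioo (-b) (-a) \ {-xh}, -x ∈ Ioo a b \ {xh} := by
    rintro x ⟨hx, hxx⟩
    exact ⟨neg_mem_Ioo' hx, fun h => hxx (by rw [← (h : -x = xh)]; simp)⟩
  refine N.not_integrable (y := fun x => y (-x)) ?_ ?_ ε hε ?_
  · intro x hx
    obtain ⟨d, e⟩ := hy (-x) (hmem' x hx)
    refine ⟨d.comp x differentiable_neg.differentiableAt, ?_⟩
    rw [deriv_comp_neg]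
    linear_combination e
  · rintro ⟨yt, hyt, he⟩
    refine hext ⟨fun x => yt (-x), ?_, ?_⟩
    · exact hyt.comp continuous_neg.continuousOn (fun x hx => neg_mem_Ioo hx)
    · intro x hx
      have := he (hmem x hx)
      simpa using this
  · have := ((Measure.measurePreserving_neg (volume : Measure ℝ)).integrableOn_comp_preimage
      (MeasurableEquiv.neg ℝ).measurableEmbedding).2 hInt
    refine this.congr_set_ae (Eventually.of_forall fun x => ?_)
    refine propext ⟨?_, ?_⟩
    · rintro ⟨⟨⟨h1, h2⟩, h3, h4⟩, h5⟩
      refine ⟨⟨⟨?_, ?_⟩, ?_, ?_⟩, fun h => h5 ?_⟩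
      any_goals linarith
      have h : -x = xh := h
      show x = -xh
      linarith
    · rintro ⟨⟨⟨h1, h2⟩, h3, h4⟩, h5⟩
      refine ⟨⟨⟨?_, ?_⟩, ?_, ?_⟩, fun h => h5 ?_⟩
      any_goals linarith
      have h : x = -xh := h
      show -x = xh
      linarith

/-- Dividing by `q`, which vanishes at most at `xh`, does
not change the set of smooth solutions; at `xh` the divided equation follows by continuity. -/
lemma isSol_iff_sol {a b xh : ℝ} (hx : xh ∈ Ioo a b) {n : ℕ∞} (hn : 1 ≤ n)
    {p q r h ρ : ℝ → ℝ} (hh : ContinuousOn h (Ioo a b)) (hρ : ContinuousOn ρ (Ioo a b))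
    (hp : ∀ x ∈ Ioo a b, p x = q x * h x) (hr : ∀ x ∈ Ioo a b, r x = q x * ρ x)
    (hne : ∀ x ∈ Ioo a b, x ≠ xh → q x ≠ 0) (y : ℝ → ℝ) :
    IsSol a b n p q r y ↔ Sol a b n h ρ y := by
  constructor
  · rintro ⟨hC, heq⟩
    refine ⟨hC, ?_⟩
    have hoff : ∀ x ∈ Ioo a b, x ≠ xh → h x * deriv y x + y x - ρ x = 0 := by
      intro x hxI hxx
      apply mul_left_cancel₀ (hne x hxI hxx)
      have := heq x hxI
      rw [hp x hxI, hr x hxI] at this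
      linear_combination this
    have hnhds := Ioo_mem_nhds hx.1 hx.2
    have hdc : ContinuousOn (deriv y) (Ioo a b) :=
      (hC.continuousOn_deriv_of_isOpen isOpen_Ioo (by exact_mod_cast hn))
    have hc : ContinuousAt (fun x => h x * deriv y x + y x - ρ x) xh :=
      (((hh.mul hdc).add hC.continuousOn).sub hρ).continuousAt hnhds
    have hx0 : h xh * deriv y xh + y xh - ρ xh = 0 := by
      refine tendsto_nhds_unique (hc.tendsto.mono_left (nhdsWithin_le_nhds (s := {xh}ᶜ))) ?_
      refine tendsto_const_nhds.congr' ?_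
      filter_upwards [eventually_ne_Ioo hx] with x hxI using (hoff x hxI.1 hxI.2).symm
    intro x hxI
    by_cases hxx : x = xh
    · rw [hxx]; linarith
    · linarith [hoff x hxI hxx]
  · rintro ⟨hC, heq⟩
    refine ⟨hC, fun x hxI => ?_⟩
    rw [hp x hxI, hr x hxI, ← heq x hxI]
    ring

end Auxiliary

/-- **Proposition B(iv)-(v).** -/
theorem even_order_case
    (a b xh : ℝ) (hx : xh ∈ Ioo a b) (m : ℕ∞)
    (p q r : ℝ → ℝ) (lp lq lr : ℕ) (l : ℕ)
    (hpC : ContDiffOn ℝ m p (Ioo a b))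
    (hqC : ContDiffOn ℝ m q (Ioo a b))
    (hrC : ContDiffOn ℝ m r (Ioo a b))
    (hlpm : (lp : ℕ∞) < m) (hlqm : (lq : ℕ∞) < m)
    (hzp : HasZeroOfOrder p xh lp)
    (hzq : HasZeroOfOrder q xh lq)
    (hzr : HasZeroOfOrder r xh lr)
    (hnop : ∀ x ∈ Ioo a b, x ≠ xh → p x ≠ 0)
    (hnoq : ∀ x ∈ Ioo a b, x ≠ xh → q x ≠ 0)
    (hldef : l = lp - lq) (hl2 : 2 ≤ l) (hleven : Even l) (hlr : lq ≤ lr)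
    -- the C^l extension `h` of `p/q`, with a zero of order `l` at `xh`:
    (h : ℝ → ℝ)
    (hhC : ContDiffOn ℝ (l : ℕ∞) h (Ioo a b))
    (hhq : ∀ x ∈ Ioo a b, q x ≠ 0 → h x = p x / q x)
    (hhz : HasZeroOfOrder h xh l) :
    -- case `h^{(l)}(xh) > 0`:
    (0 < iteratedDeriv l h xh →
      -- (a) existence:
      (∃ y : ℝ → ℝ, IsSol a b (m - lq) p q r y) ∧
      -- (b) uniqueness to the right of `xh`:
      (∀ y y' : ℝ → ℝ, IsSol a b (m - lq) p q r y → IsSol a b (m - lq) p q r y' →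
        EqOn y y' (Ico xh b)) ∧
      -- (c) one-parameter family to the left of `xh`:
      (∃ y₀ z : ℝ → ℝ, IsSol a b (m - lq) p q r y₀ ∧ (∃ x ∈ Ioo a xh, z x ≠ 0) ∧
        (∀ c : ℝ, ∃ y : ℝ → ℝ, IsSol a b (m - lq) p q r y ∧
          EqOn y (fun x => y₀ x + c * z x) (Ioc a xh)) ∧
        (∀ y : ℝ → ℝ, IsSol a b (m - lq) p q r y →
          ∃ c : ℝ, EqOn y (fun x => y₀ x + c * z x) (Ioc a xh)))) ∧
    -- case `h^{(l)}(xh) < 0`: the two sides of `xh` are interchanged: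
    (iteratedDeriv l h xh < 0 →
      (∃ y : ℝ → ℝ, IsSol a b (m - lq) p q r y) ∧
      (∀ y y' : ℝ → ℝ, IsSol a b (m - lq) p q r y → IsSol a b (m - lq) p q r y' →
        EqOn y y' (Ioc a xh)) ∧
      (∃ y₀ z : ℝ → ℝ, IsSol a b (m - lq) p q r y₀ ∧ (∃ x ∈ Ioo xh b, z x ≠ 0) ∧
        (∀ c : ℝ, ∃ y : ℝ → ℝ, IsSol a b (m - lq) p q r y ∧
          EqOn y (fun x => y₀ x + c * z x) (Ico xh b)) ∧
        (∀ y : ℝ → ℝ, IsSol a b (m - lq) p q r y →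
          ∃ c : ℝ, EqOn y (fun x => y₀ x + c * z x) (Ico xh b)))) ∧
    -- (d) any solution on `U∖{xh}` which does not extend to a continuous function on
    -- `U` fails to be locally Lebesgue-integrable at `xh`:
    (∀ y : ℝ → ℝ,
      (∀ x ∈ Ioo a b, x ≠ xh →
        DifferentiableAt ℝ y x ∧ p x * deriv y x + q x * y x = r x) →
      (¬ ∃ ytilde : ℝ → ℝ, ContinuousOn ytilde (Ioo a b) ∧
          EqOn ytilde y (Ioo a b \ {xh})) →
      ∀ ε > (0:ℝ),
        ¬ IntegrableOn y ((Ioo a b ∩ Ioo (xh - ε) (xh + ε)) \ {xh}) volume) := by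
  have hlqp : lq < lp := by omega
  set n : ℕ∞ := m - lq with hn
  have hnm : n + lq = m := tsub_add_cancel_of_le hlqm.le
  have hn1 : 1 ≤ n := by
    rw [Order.one_le_iff_ne_zero]
    intro h0
    rw [h0, zero_add] at hnm
    exact hlqm.ne hnm
  -- the factors of `p`, `q`, `r` complementary to `(x - xh)^lq`
  obtain ⟨P, hPC, hP, hPx⟩ := exists_division hx (n := n) lq p (by rw [hnm]; exact hpC)
    (fun i hi => hzp.1 i (by omega))
  obtain ⟨Q, hQC, hQ, hQx⟩ := exists_division hx (n := n) lq q (by rw [hnm]; exact hqC) hzq.1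
  obtain ⟨R, hRC, hR, -⟩ := exists_division hx (n := n) lq r (by rw [hnm]; exact hrC)
    (fun i hi => hzr.1 i (by omega))
  have hPx0 : P xh = 0 := by
    rw [hzp.1 lq hlqp] at hPx
    exact (mul_eq_zero.1 hPx).resolve_left (by exact_mod_cast lq.factorial_ne_zero)
  have hQne : ∀ x ∈ Ioo a b, Q x ≠ 0 := by
    intro x hxI h0
    by_cases hxx : x = xh
    · rw [← hxx, h0, mul_zero, hxx] at hQx
      exact hzq.2 hQx.symm
    · exact hnoq x hxI hxx (by rw [hQ x hxI, h0, mul_zero])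
  have hhx : h xh = 0 := by simpa using hhz.1 0 (by omega)
  have hhPQ : ∀ x ∈ Ioo a b, h x = P x / Q x := by
    intro x hxI
    by_cases hxx : x = xh
    · rw [hxx, hhx, hPx0, zero_div]
    · rw [hhq x hxI (hnoq x hxI hxx), hP x hxI, hQ x hxI,
        mul_div_mul_left _ _ (pow_ne_zero _ (sub_ne_zero.2 hxx))]
  have hhCn : ContDiffOn ℝ n h (Ioo a b) := (hPC.div hQC hQne).congr hhPQ
  set ρ : ℝ → ℝ := fun x => R x / Q x with hρ
  have hρC : ContDiffOn ℝ n ρ (Ioo a b) := hRC.div hQC hQne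
  have hpq : ∀ x ∈ Ioo a b, p x = q x * h x := by
    intro x hxI
    have := hQne x hxI
    rw [hhPQ x hxI, hP x hxI, hQ x hxI]
    field_simp
  have hrq : ∀ x ∈ Ioo a b, r x = q x * ρ x := by
    intro x hxI
    have := hQne x hxI
    rw [hR x hxI, hQ x hxI, hρ]
    field_simp
  have hhne : ∀ x ∈ Ioo a b, x ≠ xh → h x ≠ 0 := by
    intro x hxI hxx h0
    exact hnop x hxI hxx (by rw [hpq x hxI, h0, mul_zero])
  have hSol : IsSol a b n p q r = Sol a b n h ρ := funext fun y => propext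
    (isSol_iff_sol hx hn1 hhCn.continuousOn hρC.continuousOn hpq hrq hnoq y)
  have hOff : ∀ y : ℝ → ℝ, (∀ x ∈ Ioo a b, x ≠ xh →
      DifferentiableAt ℝ y x ∧ p x * deriv y x + q x * y x = r x) →
      SolOn (Ioo a b \ {xh}) h ρ y := by
    rintro y hy x ⟨hxI, hxx⟩
    obtain ⟨d, e⟩ := hy x hxI hxx
    refine ⟨d, mul_left_cancel₀ (hnoq x hxI hxx) ?_⟩
    rw [hpq x hxI, hrq x hxI] at e
    linear_combination e
  -- `h = (x - xh)^l K` with `K` continuous, and the sign of `K xh` is that of `h^(l)(xh)`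
  obtain ⟨K, hKC, hK, hKx⟩ := exists_division hx (n := 0) l h (by simpa using hhC) hhz.1
  have hfact : (0 : ℝ) < l.factorial := by exact_mod_cast l.factorial_pos
  have Npos : 0 < iteratedDeriv l h xh → NormalForm a b xh n h ρ := by
    intro hpos
    refine normalForm_of_factor hx hn1 hhCn hρC hl2 hleven hKC.continuousOn hK ?_ hhne
    rw [← hKx] at hpos
    exact pos_of_mul_pos_right hpos hfact.le
  have Nneg : iteratedDeriv l h xh < 0 →
      NormalForm (-b) (-a) (-xh) n (fun x => -h (-x)) (fun x => ρ (-x)) := by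
    intro hneg
    refine normalForm_of_factor (K := fun x => -K (-x)) (neg_mem_Ioo hx) hn1
      (ContDiffOn.comp_neg_Ioo hhCn).neg (ContDiffOn.comp_neg_Ioo hρC) hl2 hleven
      (hKC.continuousOn.comp continuous_neg.continuousOn fun x hxI => neg_mem_Ioo' hxI).neg
      ?_ ?_ ?_
    · intro x hxI
      rw [hK (-x) (neg_mem_Ioo' hxI), show -x - xh = -(x - -xh) by ring, hleven.neg_pow]
      ring
    · rw [← hKx] at hneg
      rw [neg_neg]
      exact neg_pos.2 (neg_of_mul_neg_right hneg hfact.le)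
    · intro x hxI hxx
      exact neg_ne_zero.2 (hhne (-x) (neg_mem_Ioo' hxI) fun h0 => hxx (by rw [← h0, neg_neg]))
  rw [hSol]
  refine ⟨fun hpos => (Npos hpos).solutionStructure,
    fun hneg => solutionStructure_of_reflect (Nneg hneg).solutionStructure,
    fun y hy hext => ?_⟩
  rcases lt_or_gt_of_ne hhz.2 with hneg | hpos
  · exact not_integrable_of_reflect (Nneg hneg) (hOff y hy) hext
  · exact (Npos hpos).not_integrable (hOff y hy) hext

end SingularODE19
end
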